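/- For p ∈ [0,1) and fixed convex bodies K, L in ℝⁿ with 0 in their interiors, the function λ ↦ vol((1−λ)K +ₚ λL) is continuously differentiable on [0,1], with derivative ∫_{Sⁿ⁻¹} ((h_L^p − h_K^p)/p)·((1−λ)h_K^p + λh_L^p)^{(1−p)/p} dS_{K_λ} for p > 0 and ∫_{Sⁿ⁻¹} h_K^{1−λ}h_L^λ·log(h_L/h_K) dS_{K_λ} for p = 0, where K_λ = (1−λ)K +ₚ λL. -/

import Mathlib

open Real Set MeasureTheory
open scoped RealInnerProductSpace Pointwise

/-- The support function of a set `K` at `u`. -/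
noncomputable def suppFn {n : ℕ} (K : Set (EuclideanSpace ℝ (Fin n)))
    (u : EuclideanSpace ℝ (Fin n)) : ℝ :=
  sSup ((fun x => ⟪x, u⟫) '' K)

open Classical in
/-- The `p`-mean `(1-λ)h_K +ₚ λh_L` (geometric mean for `p = 0`). -/
noncomputable def pMean {n : ℕ} (p : ℝ) (K L : Set (EuclideanSpace ℝ (Fin n)))
    (lam : ℝ) (u : EuclideanSpace ℝ (Fin n)) : ℝ :=
  if p = 0 then suppFn K u ^ (1 - lam) * suppFn L u ^ lam
  else ((1 - lam) * suppFn K u ^ p + lam * suppFn L u ^ p) ^ (1 / p)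

/-- The `L^p`-combination `(1-λ)K +ₚ λL` as the Wulff shape of the `p`-mean. -/
noncomputable def pComb {n : ℕ} (p : ℝ) (K L : Set (EuclideanSpace ℝ (Fin n)))
    (lam : ℝ) : Set (EuclideanSpace ℝ (Fin n)) :=
  ⋂ u ∈ Metric.sphere (0 : EuclideanSpace ℝ (Fin n)) 1, {x | ⟪x, u⟫ ≤ pMean p K L lam u}

/-!
The volume of a convex body `W` around the origin is `(1 / n!) ∫ exp (-gauge W x) dx`, and for the
Wulff shape `W` of `f` the gauge is `gauge W x = max_u ⟪x, u⟫ / f u`. If the gauge is differentiable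
at `x`, as it is for almost every `x`, then the maximum is attained only at the outer normal
`u = ν x`. Hence for a family `f l` the envelope theorem gives
`d/dl gauge (W l) x = -gauge (W l) x * f' l (ν x) / f l (ν x)`, and `ν x` depends continuously on
`l`. Dominated convergence turns these two facts into Alexandrov's formula
`d/dl vol (W l) = ∫ f' l dS_{W l}` and into the continuity of its right-hand side, where `S_W` is
the image under `ν` of the density `(1 / n!) exp (-gauge W) * gauge W * ‖∇ (gauge W)‖`.

Applied to `W = K + t M`, the same formula shows that `S_K` represents the first variation
`M ↦ d/dt vol (K + t M)`. This determines the integrals of positively homogeneous functions, because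
differences of support functions form a lattice that is dense in the continuous functions on the
sphere.
-/

section

open Filter Topology Module
open scoped Gradient

section LayerCake

theorem lintegral_exp_neg_eq_lintegral_meas_le {α : Type*} [MeasurableSpace α] {μ : Measure α}
    [SFinite μ] {g : α → ℝ} (hg : Measurable g) (hg0 : ∀ x, 0 ≤ g x) :
    ∫⁻ x, ENNReal.ofReal (exp (-g x)) ∂μ =
      ∫⁻ s in Ioi (0 : ℝ), ENNReal.ofReal (exp (-s)) * μ {x | g x ≤ s} := by
  have exp_eq_tail (a : ℝ) (ha : 0 ≤ a) : ENNReal.ofReal (exp (-a)) =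
      ∫⁻ s in Ioi (0 : ℝ), (Ici a).indicator (fun s => ENNReal.ofReal (exp (-s))) s := by
    have hset : (Ici a ∩ Ioi 0 : Set ℝ) =ᵐ[volume] Ioi a := by
      simpa [inter_eq_left.2 (Ioi_subset_Ioi ha)] using
        (Ioi_ae_eq_Ici (a := a) (μ := volume)).symm.inter (ae_eq_refl (Ioi (0 : ℝ)))
    rw [lintegral_indicator measurableSet_Ici, Measure.restrict_restrict measurableSet_Ici,
      Measure.restrict_congr_set hset, ← integral_exp_neg_Ioi,
      ofReal_integral_eq_lintegral_ofReal (integrableOn_exp_neg_Ioi a)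
        (Eventually.of_forall fun s => (exp_pos _).le)]
  have hmeas : Measurable (Function.uncurry fun (x : α) (s : ℝ) =>
      (Ici (g x)).indicator (fun s => ENNReal.ofReal (exp (-s))) s) :=
    Measurable.indicator (s := {z : α × ℝ | g z.1 ≤ z.2}) (by fun_prop)
      (measurableSet_le (hg.comp measurable_fst) measurable_snd)
  simp_rw [fun x => exp_eq_tail (g x) (hg0 x)]
  rw [lintegral_lintegral_swap hmeas.aemeasurable]
  refine lintegral_congr fun s => ?_
  rw [← lintegral_indicator_const (measurableSet_le hg measurable_const)]
  rfl

theorem lintegral_exp_neg_mul_pow (n : ℕ) :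
    ∫⁻ s in Ioi (0 : ℝ), ENNReal.ofReal (exp (-s) * s ^ n) = n.factorial := by
  have hint : IntegrableOn (fun s : ℝ => exp (-s) * s ^ n) (Ioi 0) := by
    simpa using Real.GammaIntegral_convergent (s := n + 1) (by positivity)
  have hgamma := Real.Gamma_eq_integral (s := n + 1) (by positivity)
  simp only [add_sub_cancel_right, rpow_natCast, Real.Gamma_nat_eq_factorial] at hgamma
  rw [← ofReal_integral_eq_lintegral_ofReal hint, ← hgamma, ENNReal.ofReal_natCast]
  filter_upwards [ae_restrict_mem measurableSet_Ioi] with s hs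
  exact mul_nonneg (exp_pos _).le (pow_nonneg (le_of_lt hs) n)

end LayerCake

/-- A convex body containing the origin in its interior. -/
structure IsBodyAroundZero {E : Type*} [NormedAddCommGroup E] [NormedSpace ℝ E] (K : Set E) :
    Prop where
  isCompact : IsCompact K
  convex : Convex ℝ K
  zero_mem_interior : (0 : E) ∈ interior K

section GaugeVolume

variable {E : Type*} [NormedAddCommGroup E] [NormedSpace ℝ E] {K : Set E}

theorem IsBodyAroundZero.mem_nhds (hK : IsBodyAroundZero K) : K ∈ 𝓝 0 :=
  mem_interior_iff_mem_nhds.1 hK.zero_mem_interior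

theorem gauge_le_iff_mem_smul (hKc : IsClosed K) (hKv : Convex ℝ K) (hK0 : K ∈ 𝓝 0) {s : ℝ}
    (hs : 0 < s) {x : E} : gauge K x ≤ s ↔ x ∈ s • K := by
  have hone : gauge K (s⁻¹ • x) ≤ 1 ↔ s⁻¹ • x ∈ K := by
    rw [gauge_le_one_iff_mem_closure hKv hK0, hKc.closure_eq]
  rw [mem_smul_set_iff_inv_smul_mem₀ hs.ne', ← hone, gauge_smul_of_nonneg (inv_nonneg.2 hs.le),
    smul_eq_mul, inv_mul_le_iff₀ hs, mul_one]

theorem isBodyAroundZero_closedBall [ProperSpace E] {w : E} {r : ℝ} (hw : ‖w‖ < r) :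
    IsBodyAroundZero (Metric.closedBall w r) where
  isCompact := isCompact_closedBall w r
  convex := convex_closedBall w r
  zero_mem_interior := Metric.ball_subset_interior_closedBall (by simpa using hw)

variable [FiniteDimensional ℝ E] [MeasurableSpace E] [BorelSpace E]
  (μ : Measure E) [μ.IsAddHaarMeasure]

theorem lintegral_exp_neg_gauge (hKc : IsClosed K) (hKv : Convex ℝ K) (hK0 : K ∈ 𝓝 0) :
    ∫⁻ x, ENNReal.ofReal (exp (-gauge K x)) ∂μ = (finrank ℝ E).factorial * μ K := by
  have hlevel : ∀ s ∈ Ioi (0 : ℝ), ENNReal.ofReal (exp (-s)) * μ {x | gauge K x ≤ s} =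
      ENNReal.ofReal (exp (-s) * s ^ finrank ℝ E) * μ K := by
    intro s (hs : 0 < s)
    have hset : {x | gauge K x ≤ s} = s • K :=
      Set.ext fun x => gauge_le_iff_mem_smul hKc hKv hK0 hs
    rw [hset, Measure.addHaar_smul, abs_of_pos (by positivity), ← mul_assoc,
      ← ENNReal.ofReal_mul (exp_pos _).le]
  rw [lintegral_exp_neg_eq_lintegral_meas_le (continuous_gauge hKv hK0).measurable gauge_nonneg,
    setLIntegral_congr_fun measurableSet_Ioi hlevel, lintegral_mul_const _ (by fun_prop),
    lintegral_exp_neg_mul_pow]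

namespace IsBodyAroundZero

theorem integral_exp_neg_gauge (hK : IsBodyAroundZero K) :
    ∫ x, exp (-gauge K x) ∂μ = (finrank ℝ E).factorial * μ.real K := by
  have hcont : Continuous fun x => exp (-gauge K x) :=
    (continuous_gauge hK.convex hK.mem_nhds).neg.rexp
  rw [integral_eq_lintegral_of_nonneg_ae (Eventually.of_forall fun x => (exp_pos _).le)
    hcont.aestronglyMeasurable,
    lintegral_exp_neg_gauge μ hK.isCompact.isClosed hK.convex hK.mem_nhds, ENNReal.toReal_mul,
    ENNReal.toReal_natCast, Measure.real]

theorem integrable_exp_neg_gauge (hK : IsBodyAroundZero K) :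
    Integrable (fun x => exp (-gauge K x)) μ := by
  refine ⟨(continuous_gauge hK.convex hK.mem_nhds).neg.rexp.aestronglyMeasurable, ?_⟩
  rw [hasFiniteIntegral_iff_ofReal (Eventually.of_forall fun x => (exp_pos _).le),
    lintegral_exp_neg_gauge μ hK.isCompact.isClosed hK.convex hK.mem_nhds]
  exact ENNReal.mul_lt_top (by simp) hK.isCompact.measure_lt_top

end IsBodyAroundZero

theorem integrable_norm_mul_exp_neg_mul_norm {b : ℝ} (hb : 0 < b) :
    Integrable (fun x : E => ‖x‖ * exp (-(b * ‖x‖))) μ := by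
  have hball : 0 < 2 / b := by positivity
  have hexp : Integrable (fun x : E => exp (-(b / 2 * ‖x‖))) μ := by
    have h := (isBodyAroundZero_closedBall (w := (0 : E)) (r := 2 / b)
      (by simpa using hb)).integrable_exp_neg_gauge μ
    refine h.congr (Eventually.of_forall fun x => ?_)
    beta_reduce
    rw [gauge_closedBall hball.le, div_div_eq_mul_div, mul_comm, mul_div_right_comm]
  refine (hexp.const_mul (2 / b)).mono' (by fun_prop) (Eventually.of_forall fun x => ?_)
  have hle : ‖x‖ ≤ 2 / b * exp (b / 2 * ‖x‖) := by
    have := add_one_le_exp (b / 2 * ‖x‖)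
    calc ‖x‖ = 2 / b * (b / 2 * ‖x‖) := by field_simp
      _ ≤ 2 / b * exp (b / 2 * ‖x‖) := by gcongr; linarith
  calc ‖‖x‖ * exp (-(b * ‖x‖))‖ = ‖x‖ * exp (-(b * ‖x‖)) := norm_of_nonneg (by positivity)
    _ ≤ 2 / b * exp (b / 2 * ‖x‖) * exp (-(b * ‖x‖)) := by gcongr
    _ = 2 / b * exp (-(b / 2 * ‖x‖)) := by rw [mul_assoc, ← exp_add]; ring_nf

end GaugeVolume

section SurfaceArea

variable {E : Type*} [NormedAddCommGroup E] [InnerProductSpace ℝ E]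

theorem inner_gradient_gauge_self [CompleteSpace E] {K : Set E} {x : E}
    (hd : DifferentiableAt ℝ (gauge K) x) : ⟪∇ (gauge K) x, x⟫ = gauge K x := by
  have hd1 : HasFDerivAt (gauge K) (fderiv ℝ (gauge K) x) ((1 : ℝ) • x) := by
    simpa using hd.hasFDerivAt
  have hray : HasDerivAt (fun s : ℝ => gauge K (s • x)) (fderiv ℝ (gauge K) x x) 1 := by
    simpa [Function.comp_def] using
      hd1.comp_hasDerivAt 1 ((hasDerivAt_id (1 : ℝ)).smul_const x)
  have hlin : HasDerivAt (fun s : ℝ => s * gauge K x) (gauge K x) 1 := by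
    simpa using (hasDerivAt_id (1 : ℝ)).mul_const (gauge K x)
  have heq : (fun s : ℝ => gauge K (s • x)) =ᶠ[𝓝 1] fun s => s * gauge K x := by
    filter_upwards [Ioi_mem_nhds zero_lt_one] with s hs
    rw [gauge_smul_of_nonneg (le_of_lt hs), smul_eq_mul]
  rw [← hray.unique (hlin.congr_of_eventuallyEq heq), ← InnerProductSpace.toDual_apply_apply,
    toDual_gradient]

variable [FiniteDimensional ℝ E]

/-- The outer unit normal of the dilate of `K` whose boundary passes through `x`. It is `0` where
the gauge of `K` is not differentiable. -/
noncomputable def outerNormal (K : Set E) (x : E) : E :=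
  NormedSpace.normalize (∇ (gauge K) x)

/-- The density with respect to Lebesgue measure whose image under `outerNormal K` is the surface
area measure of `K`. -/
noncomputable def surfaceAreaDensity (K : Set E) (x : E) : ℝ :=
  ((finrank ℝ E).factorial : ℝ)⁻¹ * (exp (-gauge K x) * gauge K x * ‖∇ (gauge K) x‖)

theorem surfaceAreaDensity_nonneg (K : Set E) (x : E) : 0 ≤ surfaceAreaDensity K x :=
  mul_nonneg (by positivity)
    (mul_nonneg (mul_nonneg (exp_pos _).le (gauge_nonneg x)) (norm_nonneg _))

variable [MeasurableSpace E] [BorelSpace E]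

theorem measurable_gradient (f : E → ℝ) : Measurable (∇ f) :=
  (InnerProductSpace.toDual ℝ E).symm.continuous.measurable.comp (measurable_fderiv ℝ f)

/-- The surface area measure `S_K` of a convex body `K` around the origin, as a measure on the
ambient space carried by the unit sphere. Integrating over the level sets `s • ∂K` of the gauge
by the coarea formula turns this push-forward into the usual push-forward of the
`(n-1)`-dimensional Hausdorff measure on `∂K` under the outer unit normal, with the factor
`∫ s in Ioi 0, exp (-s) * s ^ n = n!`. -/
noncomputable def surfaceAreaMeasure (K : Set E) : Measure E :=
  (volume.withDensity fun x => ENNReal.ofReal (surfaceAreaDensity K x)).map (outerNormal K)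

theorem measurable_outerNormal (K : Set E) : Measurable (outerNormal K) := by
  have h := measurable_gradient (gauge K)
  exact h.norm.inv.smul h

namespace IsBodyAroundZero

variable {K : Set E} (hK : IsBodyAroundZero K)
include hK

theorem ae_differentiableAt_gauge : ∀ᵐ x, DifferentiableAt ℝ (gauge K) x := by
  obtain ⟨C, hC⟩ := hK.convex.lipschitz_gauge hK.mem_nhds
  exact hC.ae_differentiableAt

theorem measurable_surfaceAreaDensity : Measurable (surfaceAreaDensity K) := by
  have hcont : Continuous fun x => exp (-gauge K x) * gauge K x :=
    (continuous_gauge hK.convex hK.mem_nhds).neg.rexp.mul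
      (continuous_gauge hK.convex hK.mem_nhds)
  exact (hcont.measurable.mul (measurable_gradient _).norm).const_mul _

theorem integrable_surfaceAreaDensity : Integrable (surfaceAreaDensity K) := by
  obtain ⟨C, hC⟩ := hK.convex.lipschitz_gauge hK.mem_nhds
  obtain ⟨R, hR, hKR⟩ := hK.isCompact.isBounded.subset_closedBall_lt 0 0
  have hlower (x : E) : R⁻¹ * ‖x‖ ≤ gauge K x := by
    rw [inv_mul_eq_div]
    exact le_gauge_of_subset_closedBall (absorbent_nhds_zero hK.mem_nhds) hR.le hKR
  have hupper (x : E) : gauge K x ≤ C * ‖x‖ := by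
    simpa [abs_of_nonneg, gauge_nonneg] using hC.norm_sub_le x 0
  have hgrad (x : E) : ‖∇ (gauge K) x‖ ≤ C := by
    simpa [gradient] using norm_fderiv_le_of_lipschitz ℝ hC (x₀ := x)
  refine ((integrable_norm_mul_exp_neg_mul_norm volume (inv_pos.2 hR)).const_mul
    (((finrank ℝ E).factorial : ℝ)⁻¹ * C * C)).mono'
    hK.measurable_surfaceAreaDensity.aestronglyMeasurable (Eventually.of_forall fun x => ?_)
  calc ‖surfaceAreaDensity K x‖ = surfaceAreaDensity K x :=
        norm_of_nonneg (surfaceAreaDensity_nonneg K x)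
    _ ≤ ((finrank ℝ E).factorial : ℝ)⁻¹ * (exp (-(R⁻¹ * ‖x‖)) * (C * ‖x‖) * C) := by
        unfold surfaceAreaDensity
        gcongr
        exacts [gauge_nonneg x, hlower x, hupper x, hgrad x]
    _ = ((finrank ℝ E).factorial : ℝ)⁻¹ * C * C * (‖x‖ * exp (-(R⁻¹ * ‖x‖))) := by ring

theorem isFiniteMeasure_surfaceAreaMeasure : IsFiniteMeasure (surfaceAreaMeasure K) := by
  have := isFiniteMeasure_withDensity_ofReal hK.integrable_surfaceAreaDensity.2
  unfold surfaceAreaMeasure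
  infer_instance

theorem ae_mem_sphere_surfaceAreaMeasure :
    ∀ᵐ u ∂surfaceAreaMeasure K, u ∈ Metric.sphere (0 : E) 1 := by
  rw [surfaceAreaMeasure, ae_map_iff (p := (· ∈ Metric.sphere (0 : E) 1))
    (measurable_outerNormal K).aemeasurable Metric.isClosed_sphere.measurableSet,
    ae_withDensity_iff hK.measurable_surfaceAreaDensity.ennreal_ofReal]
  refine Eventually.of_forall fun x hx => ?_
  have hgrad : ∇ (gauge K) x ≠ 0 := fun h => hx (by simp [surfaceAreaDensity, h])
  simpa [outerNormal] using hgrad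

theorem surfaceAreaMeasure_ne_zero [Nontrivial E] : surfaceAreaMeasure K ≠ 0 := by
  rw [surfaceAreaMeasure, Ne, Measure.map_eq_zero_iff (measurable_outerNormal K).aemeasurable,
    withDensity_eq_zero_iff hK.measurable_surfaceAreaDensity.ennreal_ofReal.aemeasurable]
  intro hzero
  have hne : ∀ᵐ x : E, x ≠ 0 := by simp [ae_iff]
  obtain ⟨x, hx, hd, hx0⟩ := (hzero.and (hK.ae_differentiableAt_gauge.and hne)).exists
  have hgauge : 0 < gauge K x :=
    (gauge_pos (absorbent_nhds_zero hK.mem_nhds)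
      ((NormedSpace.isVonNBounded_iff ℝ).2 hK.isCompact.isBounded)).2 hx0
  have hgrad : ∇ (gauge K) x ≠ 0 := fun h => by
    have := inner_gradient_gauge_self hd
    rw [h, inner_zero_left] at this
    exact hgauge.ne this
  have hpos : 0 < surfaceAreaDensity K x := by
    unfold surfaceAreaDensity
    have := norm_pos_iff.2 hgrad
    positivity
  exact hpos.not_ge (ENNReal.ofReal_eq_zero.1 hx)

theorem aestronglyMeasurable_surfaceAreaMeasure {φ : E → ℝ}
    (hφ : ContinuousOn φ (Metric.sphere 0 1)) :
    AEStronglyMeasurable φ (surfaceAreaMeasure K) := by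
  rw [← Measure.restrict_eq_self_of_ae_mem hK.ae_mem_sphere_surfaceAreaMeasure]
  exact hφ.aestronglyMeasurable Metric.isClosed_sphere.measurableSet

theorem integrable_surfaceAreaMeasure {φ : E → ℝ} (hφ : ContinuousOn φ (Metric.sphere 0 1)) :
    Integrable φ (surfaceAreaMeasure K) := by
  have := hK.isFiniteMeasure_surfaceAreaMeasure
  obtain ⟨C, hC⟩ := (isCompact_sphere (0 : E) 1).exists_bound_of_continuousOn hφ
  exact .of_bound (hK.aestronglyMeasurable_surfaceAreaMeasure hφ) C
    (hK.ae_mem_sphere_surfaceAreaMeasure.mono hC)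

theorem integral_surfaceAreaMeasure {φ : E → ℝ} (hφ : ContinuousOn φ (Metric.sphere 0 1)) :
    ∫ u, φ u ∂surfaceAreaMeasure K = ∫ x, surfaceAreaDensity K x * φ (outerNormal K x) := by
  rw [surfaceAreaMeasure, integral_map (measurable_outerNormal K).aemeasurable
    (hK.aestronglyMeasurable_surfaceAreaMeasure hφ),
    integral_withDensity_eq_integral_toReal_smul hK.measurable_surfaceAreaDensity.ennreal_ofReal
      (by simp)]
  simp only [ENNReal.toReal_ofReal (surfaceAreaDensity_nonneg K _), smul_eq_mul]

end IsBodyAroundZero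

end SurfaceArea

section WulffShape

theorem exists_pos_forall_le_and_le_of_isCompact {X : Type*} [TopologicalSpace X] {t : Set X}
    (ht : IsCompact t) {f : X → ℝ} (hf : ContinuousOn f t) (hpos : ∀ u ∈ t, 0 < f u) :
    ∃ c > 0, ∃ C > 0, ∀ u ∈ t, c ≤ f u ∧ f u ≤ C := by
  obtain ⟨C, hC⟩ := ht.exists_bound_of_continuousOn hf
  obtain ⟨D, hD⟩ := ht.exists_bound_of_continuousOn (hf.inv₀ fun u hu => (hpos u hu).ne')
  refine ⟨(max D 1)⁻¹, by positivity, max C 1, by positivity, fun u hu => ⟨?_, ?_⟩⟩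
  · rw [inv_le_comm₀ (by positivity) (hpos u hu)]
    exact (le_abs_self _).trans ((hD u hu).trans (le_max_left _ _))
  · exact (le_abs_self _).trans ((hC u hu).trans (le_max_left _ _))

variable {E : Type*} [NormedAddCommGroup E] [InnerProductSpace ℝ E]

/-- The Wulff shape of `f`: the intersection of the half-spaces at signed distance `f u` from the
origin with outer unit normal `u`. -/
def wulffShape (f : E → ℝ) : Set E :=
  ⋂ u ∈ Metric.sphere (0 : E) 1, {x | ⟪x, u⟫ ≤ f u}

variable {f : E → ℝ}

theorem mem_wulffShape {x : E} :
    x ∈ wulffShape f ↔ ∀ u ∈ Metric.sphere (0 : E) 1, ⟪x, u⟫ ≤ f u :=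
  mem_iInter₂

theorem isClosed_wulffShape (f : E → ℝ) : IsClosed (wulffShape f) :=
  isClosed_biInter fun _ _ => isClosed_le (by fun_prop) continuous_const

theorem convex_wulffShape (f : E → ℝ) : Convex ℝ (wulffShape f) :=
  convex_iInter₂ fun u _ => convex_halfSpace_le
    ⟨fun x y => inner_add_left x y u, fun c x => real_inner_smul_left x u c⟩ (f u)

theorem closedBall_subset_wulffShape {c : ℝ} (h : ∀ u ∈ Metric.sphere (0 : E) 1, c ≤ f u) :
    Metric.closedBall 0 c ⊆ wulffShape f := by
  intro x hx
  refine mem_wulffShape.2 fun u hu => ?_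
  calc ⟪x, u⟫ ≤ ‖x‖ * ‖u‖ := real_inner_le_norm x u
    _ ≤ c := by simpa [mem_sphere_zero_iff_norm.1 hu] using hx
    _ ≤ f u := h u hu

theorem wulffShape_subset_closedBall {C : ℝ} (hC : 0 ≤ C)
    (h : ∀ u ∈ Metric.sphere (0 : E) 1, f u ≤ C) : wulffShape f ⊆ Metric.closedBall 0 C := by
  intro x hx
  rcases eq_or_ne x 0 with rfl | hx0
  · simpa using hC
  have hu : NormedSpace.normalize x ∈ Metric.sphere (0 : E) 1 := by simpa using hx0
  have hinner : ⟪x, NormedSpace.normalize x⟫ = ‖x‖ := by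
    rw [NormedSpace.normalize, real_inner_smul_right, real_inner_self_eq_norm_sq]
    field_simp [norm_ne_zero_iff.2 hx0]
  simpa [hinner] using (mem_wulffShape.1 hx _ hu).trans (h _ hu)

theorem gradient_eq_of_forall_inner_le [CompleteSpace E] {g : E → ℝ} {x w : E}
    (hd : DifferentiableAt ℝ g x) (hle : ∀ y, ⟪y, w⟫ ≤ g y) (heq : ⟪x, w⟫ = g x) :
    ∇ g x = w := by
  have hinner : HasFDerivAt (fun y => ⟪y, w⟫) (InnerProductSpace.toDual ℝ E w) x := by
    simp_rw [real_inner_comm w]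
    exact (InnerProductSpace.toDual ℝ E w).hasFDerivAt
  have hmin : IsLocalMin (fun y => g y - ⟪y, w⟫) x :=
    Eventually.of_forall fun y => by simpa [heq] using hle y
  have hzero := hmin.hasFDerivAt_eq_zero (hd.hasFDerivAt.sub hinner)
  rw [gradient, sub_eq_zero.1 hzero, LinearIsometryEquiv.symm_apply_apply]

variable [FiniteDimensional ℝ E]

theorem isBodyAroundZero_wulffShape (hf : ContinuousOn f (Metric.sphere 0 1))
    (hpos : ∀ u ∈ Metric.sphere (0 : E) 1, 0 < f u) : IsBodyAroundZero (wulffShape f) := by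
  obtain ⟨c, hc, C, hC, hcC⟩ :=
    exists_pos_forall_le_and_le_of_isCompact (isCompact_sphere (0 : E) 1) hf hpos
  exact
    { isCompact := (isCompact_closedBall 0 C).of_isClosed_subset (isClosed_wulffShape f)
        (wulffShape_subset_closedBall hC.le fun u hu => (hcC u hu).2)
      convex := convex_wulffShape f
      zero_mem_interior := interior_mono (closedBall_subset_wulffShape fun u hu => (hcC u hu).1)
        (Metric.ball_subset_interior_closedBall (Metric.mem_ball_self hc)) }

variable (hf : ContinuousOn f (Metric.sphere 0 1))
  (hpos : ∀ u ∈ Metric.sphere (0 : E) 1, 0 < f u)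
include hf hpos

theorem gauge_wulffShape_le_iff {x : E} {a : ℝ} (ha : 0 < a) :
    gauge (wulffShape f) x ≤ a ↔ ∀ u ∈ Metric.sphere (0 : E) 1, ⟪x, u⟫ * (f u)⁻¹ ≤ a := by
  rw [gauge_le_iff_mem_smul (isClosed_wulffShape f) (convex_wulffShape f)
    (isBodyAroundZero_wulffShape hf hpos).mem_nhds ha, mem_smul_set_iff_inv_smul_mem₀ ha.ne',
    mem_wulffShape]
  refine forall₂_congr fun u hu => ?_
  rw [real_inner_smul_left, inv_mul_le_iff₀ ha, mul_inv_le_iff₀ (hpos u hu)]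

theorem isGreatest_gauge_wulffShape [Nontrivial E] (x : E) :
    IsGreatest ((fun u => ⟪x, u⟫ * (f u)⁻¹) '' Metric.sphere (0 : E) 1)
      (gauge (wulffShape f) x) := by
  obtain ⟨u, hu, hmax⟩ := (isCompact_sphere (0 : E) 1).exists_isMaxOn
    (NormedSpace.sphere_nonempty.2 zero_le_one)
    ((continuousOn_const.inner continuousOn_id).mul (hf.inv₀ fun u hu => (hpos u hu).ne'))
  have hnonneg : 0 ≤ ⟪x, u⟫ * (f u)⁻¹ := by
    by_contra! hneg
    have hneg_mem : -u ∈ Metric.sphere (0 : E) 1 := by simpa using hu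
    have hinner : ⟪x, u⟫ < 0 := neg_of_mul_neg_left hneg (inv_pos.2 (hpos u hu)).le
    have hopp : 0 < ⟪x, -u⟫ * (f (-u))⁻¹ :=
      mul_pos (by simpa using hinner) (inv_pos.2 (hpos _ hneg_mem))
    exact (hopp.trans_le (hmax hneg_mem)).not_gt hneg
  have hub : ∀ v ∈ Metric.sphere (0 : E) 1, ⟪x, v⟫ * (f v)⁻¹ ≤ gauge (wulffShape f) x :=
    fun v hv => le_of_forall_pos_le_add fun ε hε =>
      (gauge_wulffShape_le_iff hf hpos (add_pos_of_nonneg_of_pos (gauge_nonneg x) hε)).1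
        (le_add_of_nonneg_right hε.le) v hv
  have hle : gauge (wulffShape f) x ≤ ⟪x, u⟫ * (f u)⁻¹ :=
    le_of_forall_pos_le_add fun ε hε =>
      (gauge_wulffShape_le_iff hf hpos (add_pos_of_nonneg_of_pos hnonneg hε)).2 fun v hv =>
        (hmax hv).trans (le_add_of_nonneg_right hε.le)
  exact ⟨⟨u, hu, (hub u hu).antisymm hle⟩, forall_mem_image.2 hub⟩

variable [Nontrivial E] {x u : E} (hd : DifferentiableAt ℝ (gauge (wulffShape f)) x)
  (hu : u ∈ Metric.sphere (0 : E) 1) (hmax : ⟪x, u⟫ * (f u)⁻¹ = gauge (wulffShape f) x)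
include hd hu hmax

theorem gradient_gauge_wulffShape : ∇ (gauge (wulffShape f)) x = (f u)⁻¹ • u := by
  refine gradient_eq_of_forall_inner_le hd (fun y => ?_) ?_
  · rw [real_inner_smul_right, mul_comm]
    exact (isGreatest_gauge_wulffShape hf hpos y).2 (mem_image_of_mem _ hu)
  · rw [real_inner_smul_right, mul_comm, hmax]

theorem outerNormal_wulffShape : outerNormal (wulffShape f) x = u := by
  rw [outerNormal, gradient_gauge_wulffShape hf hpos hd hu hmax,
    NormedSpace.normalize_smul_of_pos (inv_pos.2 (hpos u hu)),
    NormedSpace.normalize_eq_self_of_norm_eq_one (mem_sphere_zero_iff_norm.1 hu)]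

theorem surfaceAreaDensity_wulffShape : surfaceAreaDensity (wulffShape f) x =
    ((finrank ℝ E).factorial : ℝ)⁻¹ *
      (exp (-gauge (wulffShape f) x) * gauge (wulffShape f) x * (f u)⁻¹) := by
  rw [surfaceAreaDensity, gradient_gauge_wulffShape hf hpos hd hu hmax, norm_smul,
    mem_sphere_zero_iff_norm.1 hu, mul_one, norm_of_nonneg (inv_pos.2 (hpos u hu)).le]

end WulffShape

section Envelope

variable {X : Type*}

theorem abs_sub_le_of_isGreatest_image {t : Set X} {φ ψ : X → ℝ} {a b B : ℝ}
    (ha : IsGreatest (φ '' t) a) (hb : IsGreatest (ψ '' t) b)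
    (h : ∀ u ∈ t, |φ u - ψ u| ≤ B) : |a - b| ≤ B := by
  obtain ⟨⟨u, hu, rfl⟩, hua⟩ := ha
  obtain ⟨⟨v, hv, rfl⟩, hvb⟩ := hb
  have h₁ := abs_le.1 (h u hu)
  have h₂ := abs_le.1 (h v hv)
  have h₃ := hua (mem_image_of_mem φ hv)
  have h₄ := hvb (mem_image_of_mem ψ hu)
  exact abs_le.2 ⟨by linarith, by linarith⟩

variable [TopologicalSpace X] {t : Set X}

theorem tendsto_apply_apply_of_continuousOn {Λ Y ι : Type*} [TopologicalSpace Λ]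
    [TopologicalSpace Y] {s : Set Λ} {ψ : Λ → X → Y}
    (hψ : ContinuousOn (Function.uncurry ψ) (s ×ˢ t)) {l₀ : Λ} (hl₀ : l₀ ∈ s) {v₀ : X}
    (hv₀ : v₀ ∈ t) {F : Filter ι} {a : ι → Λ} {b : ι → X} (ha : Tendsto a F (𝓝[s] l₀))
    (hb : Tendsto b F (𝓝[t] v₀)) : Tendsto (fun i => ψ (a i) (b i)) F (𝓝 (ψ l₀ v₀)) := by
  have h := hψ (l₀, v₀) ⟨hl₀, hv₀⟩
  rw [ContinuousWithinAt, nhdsWithin_prod_eq] at h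
  exact h.comp (ha.prodMk hb)

theorem tendsto_argmax {Λ : Type*} [TopologicalSpace Λ] {s : Set Λ} (ht : IsCompact t)
    {ψ : Λ → X → ℝ} (hψ : ContinuousOn (Function.uncurry ψ) (s ×ˢ t)) {u : Λ → X}
    (hut : ∀ l ∈ s, u l ∈ t) (hu : ∀ l ∈ s, IsMaxOn (ψ l) t (u l)) {l₀ : Λ} (hl₀ : l₀ ∈ s)
    (huniq : ∀ v ∈ t, IsMaxOn (ψ l₀) t v → v = u l₀) :
    Tendsto u (𝓝[s] l₀) (𝓝[t] u l₀) := by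
  have hmem : ∀ᶠ l in 𝓝[s] l₀, u l ∈ t := eventually_mem_nhdsWithin.mono hut
  refine tendsto_nhdsWithin_iff.2
    ⟨ht.tendsto_nhds_of_unique_mapClusterPt hmem fun v hv hcl => huniq v hv ?_, hmem⟩
  obtain ⟨U, hU, hUv⟩ := mapClusterPt_iff_ultrafilter.1 hcl
  have hUt : Tendsto u U (𝓝[t] v) := tendsto_nhdsWithin_iff.2 ⟨hUv, hU hmem⟩
  refine isMaxOn_iff.2 fun w hw => le_of_tendsto_of_tendsto
    (tendsto_apply_apply_of_continuousOn hψ hl₀ hw hU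
      (tendsto_const_pure.mono_right (pure_le_nhdsWithin hw)))
    (tendsto_apply_apply_of_continuousOn hψ hl₀ hv hU hUt) ?_
  filter_upwards [hU self_mem_nhdsWithin] with l hl using hu l hl hw

variable {s : Set ℝ} {l₀ : ℝ} {ψ ψ' : ℝ → X → ℝ}

theorem eventually_abs_sub_sub_mul_le (hs : Convex ℝ s) (hl₀ : l₀ ∈ s)
    (hψ : ∀ l ∈ s, ∀ v ∈ t, HasDerivWithinAt (fun l => ψ l v) (ψ' l v) s l)
    (hψ' : ContinuousOn (Function.uncurry ψ') (s ×ˢ t)) {v₀ : X} (hv₀ : v₀ ∈ t) {ε : ℝ}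
    (hε : 0 < ε) : ∀ᶠ z in 𝓝[s] l₀ ×ˢ 𝓝[t] v₀,
      |ψ z.1 z.2 - ψ l₀ z.2 - (z.1 - l₀) * ψ' l₀ v₀| ≤ ε * |z.1 - l₀| := by
  have hnear : ∀ᶠ z in 𝓝[s] l₀ ×ˢ 𝓝[t] v₀, |ψ' z.1 z.2 - ψ' l₀ v₀| < ε :=
    Metric.tendsto_nhds.1
      (tendsto_apply_apply_of_continuousOn hψ' hl₀ hv₀ tendsto_fst tendsto_snd) ε hε
  obtain ⟨P, hP, Q, hQ, hPQ⟩ := eventually_prod_iff.1 hnear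
  obtain ⟨δ, hδ, hδP⟩ := Metric.mem_nhdsWithin_iff.1 hP
  filter_upwards [prod_mem_prod (inter_mem (mem_nhdsWithin_of_mem_nhds (Metric.ball_mem_nhds l₀ hδ))
    self_mem_nhdsWithin) (inter_mem hQ self_mem_nhdsWithin)] with ⟨l, v⟩ ⟨hl, hvQ, hvt⟩
  have hderiv : ∀ m ∈ Metric.ball l₀ δ ∩ s, HasDerivWithinAt (fun m => ψ m v - m * ψ' l₀ v₀)
      (ψ' m v - ψ' l₀ v₀) (Metric.ball l₀ δ ∩ s) m := fun m hm =>
    ((hψ m hm.2 v hvt).mono inter_subset_right).sub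
      (by simpa using (hasDerivWithinAt_id m _).mul_const (ψ' l₀ v₀))
  have hmvt := ((convex_ball l₀ δ).inter hs).norm_image_sub_le_of_norm_hasDerivWithin_le hderiv
    (fun m hm => (hPQ (hδP hm) hvQ).le) ⟨Metric.mem_ball_self hδ, hl₀⟩ hl
  simp only [norm_eq_abs] at hmvt ⊢
  convert hmvt using 2
  ring

theorem hasDerivWithinAt_apply_argmax (hs : Convex ℝ s) (hl₀ : l₀ ∈ s)
    (hψ : ∀ l ∈ s, ∀ v ∈ t, HasDerivWithinAt (fun l => ψ l v) (ψ' l v) s l)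
    (hψ' : ContinuousOn (Function.uncurry ψ') (s ×ˢ t)) {u : ℝ → X}
    (hut : ∀ l ∈ s, u l ∈ t) (hu : ∀ l ∈ s, IsMaxOn (ψ l) t (u l))
    (hlim : Tendsto u (𝓝[s] l₀) (𝓝[t] u l₀)) :
    HasDerivWithinAt (fun l => ψ l (u l)) (ψ' l₀ (u l₀)) s l₀ := by
  have hu₀ := hut l₀ hl₀
  have hfixed : Tendsto (fun l => (l, u l₀)) (𝓝[s] l₀) (𝓝[s] l₀ ×ˢ 𝓝[t] u l₀) :=
    tendsto_id.prodMk (tendsto_const_pure.mono_right (pure_le_nhdsWithin hu₀))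
  rw [hasDerivWithinAt_iff_isLittleO, Asymptotics.isLittleO_iff]
  intro ε hε
  have herr := eventually_abs_sub_sub_mul_le hs hl₀ hψ hψ' hu₀ hε
  filter_upwards [self_mem_nhdsWithin, hfixed.eventually herr,
    (tendsto_id.prodMk hlim).eventually herr] with l hl hlow hupp
  have hmax : ψ l (u l₀) ≤ ψ l (u l) := hu l hl hu₀
  have hmax₀ : ψ l₀ (u l) ≤ ψ l₀ (u l₀) := hu l₀ hl₀ (hut l hl)
  simp only [smul_eq_mul, norm_eq_abs, id_eq] at hlow hupp ⊢
  exact abs_le.2 ⟨by linarith [(abs_le.1 hlow).1], by linarith [(abs_le.1 hupp).2]⟩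

end Envelope

section Integral

theorem hasDerivWithinAt_integral_of_norm_sub_le {α G : Type*} [MeasurableSpace α]
    [NormedAddCommGroup G] [NormedSpace ℝ G] {μ : Measure α} {F : ℝ → α → G} {F' : α → G}
    {bound : α → ℝ} {s : Set ℝ} {l₀ : ℝ} (hl₀ : l₀ ∈ s) (hF : ∀ l ∈ s, Integrable (F l) μ)
    (hbound : Integrable bound μ)
    (hle : ∀ l ∈ s, ∀ᵐ x ∂μ, ‖F l x - F l₀ x‖ ≤ bound x * |l - l₀|)
    (hderiv : ∀ᵐ x ∂μ, HasDerivWithinAt (fun l => F l x) (F' x) s l₀) :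
    HasDerivWithinAt (fun l => ∫ x, F l x ∂μ) (∫ x, F' x ∂μ) s l₀ := by
  rw [hasDerivWithinAt_iff_tendsto_slope]
  have hslope : ∀ᶠ l in 𝓝[s \ {l₀}] l₀,
      ∫ x, slope (fun l => F l x) l₀ l ∂μ = slope (fun l => ∫ x, F l x ∂μ) l₀ l := by
    filter_upwards [self_mem_nhdsWithin] with l hl
    simp only [slope_def_module, integral_smul, integral_sub (hF l hl.1) (hF l₀ hl₀)]
  refine Tendsto.congr' hslope (tendsto_integral_filter_of_dominated_convergence bound ?_ ?_
    hbound (hderiv.mono fun x hx => hasDerivWithinAt_iff_tendsto_slope.1 hx))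
  · filter_upwards [self_mem_nhdsWithin] with l hl
    exact (((hF l hl.1).sub (hF l₀ hl₀)).smul (l - l₀)⁻¹).aestronglyMeasurable
  · filter_upwards [self_mem_nhdsWithin] with l hl
    filter_upwards [hle l hl.1] with x hx
    have hne : 0 < |l - l₀| := abs_pos.2 (sub_ne_zero.2 hl.2)
    rw [slope_def_module, norm_smul, norm_inv, norm_eq_abs, inv_mul_le_iff₀ hne, mul_comm]
    exact hx

end Integral

section WulffFamily

variable {E : Type*} [NormedAddCommGroup E] [InnerProductSpace ℝ E] {Λ : Type*}
  [TopologicalSpace Λ] {s : Set Λ} {f : Λ → E → ℝ}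

theorem continuousOn_inner_mul_inv
    (hf : ContinuousOn (Function.uncurry f) (s ×ˢ Metric.sphere 0 1))
    (hpos : ∀ l ∈ s, ∀ u ∈ Metric.sphere (0 : E) 1, 0 < f l u) (x : E) :
    ContinuousOn (Function.uncurry fun l u => ⟪x, u⟫ * (f l u)⁻¹) (s ×ˢ Metric.sphere 0 1) :=
  (Continuous.continuousOn (by fun_prop)).mul
    (hf.inv₀ fun z hz => (hpos z.1 hz.1 z.2 hz.2).ne')

variable [FiniteDimensional ℝ E] [Nontrivial E]
  (hf : ContinuousOn (Function.uncurry f) (s ×ˢ Metric.sphere 0 1))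
  (hpos : ∀ l ∈ s, ∀ u ∈ Metric.sphere (0 : E) 1, 0 < f l u)
include hf hpos

theorem tendsto_argmax_wulffShape {x : E} {u : Λ → E}
    (hu : ∀ l ∈ s, u l ∈ Metric.sphere (0 : E) 1 ∧
      ⟪x, u l⟫ * (f l (u l))⁻¹ = gauge (wulffShape (f l)) x) {l₀ : Λ} (hl₀ : l₀ ∈ s)
    (hd : DifferentiableAt ℝ (gauge (wulffShape (f l₀))) x) :
    Tendsto u (𝓝[s] l₀) (𝓝[Metric.sphere 0 1] u l₀) := by
  have hgreatest (l : Λ) (hl : l ∈ s) :=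
    isGreatest_gauge_wulffShape (hf.uncurry_left l hl) (hpos l hl) x
  refine tendsto_argmax (isCompact_sphere 0 1) (continuousOn_inner_mul_inv hf hpos x)
    (fun l hl => (hu l hl).1) (fun l hl => isMaxOn_iff.2 fun v hv => ?_) hl₀ fun v hv hmax => ?_
  · rw [(hu l hl).2]
    exact (hgreatest l hl).2 (mem_image_of_mem _ hv)
  · have hval : ⟪x, v⟫ * (f l₀ v)⁻¹ = gauge (wulffShape (f l₀)) x :=
      ((hgreatest l₀ hl₀).2 (mem_image_of_mem _ hv)).antisymm
        ((hu l₀ hl₀).2 ▸ hmax (hu l₀ hl₀).1)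
    rw [← outerNormal_wulffShape (hf.uncurry_left l₀ hl₀) (hpos l₀ hl₀) hd hv hval,
      ← outerNormal_wulffShape (hf.uncurry_left l₀ hl₀) (hpos l₀ hl₀) hd (hu l₀ hl₀).1
        (hu l₀ hl₀).2]

theorem exists_argmax_wulffShape : ∃ u : Λ → E → E, ∀ l ∈ s, ∀ x,
    u l x ∈ Metric.sphere (0 : E) 1 ∧
      ⟪x, u l x⟫ * (f l (u l x))⁻¹ = gauge (wulffShape (f l)) x := by
  classical
  have h (l : Λ) (hl : l ∈ s) (x : E) :=
    (isGreatest_gauge_wulffShape (hf.uncurry_left l hl) (hpos l hl) x).1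
  choose u hu using h
  exact ⟨fun l x => if hl : l ∈ s then u l hl x else 0, fun l hl x => by simpa [hl] using hu l hl x⟩

end WulffFamily

section WeakContinuity

variable {E : Type*} [NormedAddCommGroup E] [InnerProductSpace ℝ E]

/-- The value at `x` of the integrand `surfaceAreaDensity K x * φ (outerNormal K x)` of
`∫ u, φ u ∂surfaceAreaMeasure K` for the Wulff shape `K` of `f`, written in terms of the outer unit
normal `v` at `x`. In contrast to that integrand, it depends continuously on `f`, `φ` and `v`. -/
noncomputable def wulffIntegrand (f φ : E → ℝ) (x v : E) : ℝ :=
  ((finrank ℝ E).factorial : ℝ)⁻¹ *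
    (exp (-(⟪x, v⟫ * (f v)⁻¹)) * (⟪x, v⟫ * (f v)⁻¹) * ((f v)⁻¹ * φ v))

theorem continuousOn_wulffIntegrand {Λ : Type*} [TopologicalSpace Λ] {s : Set Λ}
    {f φ : Λ → E → ℝ} (hf : ContinuousOn (Function.uncurry f) (s ×ˢ Metric.sphere 0 1))
    (hpos : ∀ l ∈ s, ∀ u ∈ Metric.sphere (0 : E) 1, 0 < f l u)
    (hφ : ContinuousOn (Function.uncurry φ) (s ×ˢ Metric.sphere 0 1)) (x : E) :
    ContinuousOn (Function.uncurry fun l v => wulffIntegrand (f l) (φ l) x v)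
      (s ×ˢ Metric.sphere 0 1) :=
  have hψ := continuousOn_inner_mul_inv hf hpos x
  have hinv := hf.inv₀ fun z hz => (hpos z.1 hz.1 z.2 hz.2).ne'
  continuousOn_const.mul ((hψ.neg.rexp.mul hψ).mul (hinv.mul hφ))

variable [FiniteDimensional ℝ E]

theorem inv_mul_norm_le_gauge_wulffShape {f : E → ℝ} (hf : ContinuousOn f (Metric.sphere 0 1))
    (hpos : ∀ u ∈ Metric.sphere (0 : E) 1, 0 < f u) {C : ℝ} (hC : 0 ≤ C)
    (hfC : ∀ u ∈ Metric.sphere (0 : E) 1, f u ≤ C) (x : E) :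
    C⁻¹ * ‖x‖ ≤ gauge (wulffShape f) x := by
  rw [inv_mul_eq_div]
  exact le_gauge_of_subset_closedBall
    (absorbent_nhds_zero (isBodyAroundZero_wulffShape hf hpos).mem_nhds) hC
    (wulffShape_subset_closedBall hC hfC)

theorem abs_wulffIntegrand_le {f φ : E → ℝ} (hf : ContinuousOn f (Metric.sphere 0 1)) {c C : ℝ}
    (hc : 0 < c) (hC : 0 ≤ C) (hcC : ∀ u ∈ Metric.sphere (0 : E) 1, c ≤ f u ∧ f u ≤ C) {x v : E}
    (hmax : ⟪x, v⟫ * (f v)⁻¹ = gauge (wulffShape f) x) {A : ℝ} (hA : |(f v)⁻¹ * φ v| ≤ A) :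
    |wulffIntegrand f φ x v| ≤
      ((finrank ℝ E).factorial : ℝ)⁻¹ * (A * c⁻¹ * (‖x‖ * exp (-(C⁻¹ * ‖x‖)))) := by
  have hlow : C⁻¹ * ‖x‖ ≤ gauge (wulffShape f) x :=
    inv_mul_norm_le_gauge_wulffShape hf (fun u hu => hc.trans_le (hcC u hu).1) hC
      (fun u hu => (hcC u hu).2) x
  have hupp : gauge (wulffShape f) x ≤ c⁻¹ * ‖x‖ := by
    rw [le_inv_mul_iff₀ hc]
    exact mul_gauge_le_norm
      (Metric.ball_subset_closedBall.trans (closedBall_subset_wulffShape fun u hu => (hcC u hu).1))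
  calc |wulffIntegrand f φ x v|
      = ((finrank ℝ E).factorial : ℝ)⁻¹ * (exp (-gauge (wulffShape f) x) *
          gauge (wulffShape f) x * |(f v)⁻¹ * φ v|) := by
        rw [wulffIntegrand, hmax, abs_mul, abs_mul, abs_of_nonneg (by positivity),
          abs_of_nonneg (mul_nonneg (exp_pos _).le (gauge_nonneg x))]
    _ ≤ ((finrank ℝ E).factorial : ℝ)⁻¹ * (exp (-(C⁻¹ * ‖x‖)) * (c⁻¹ * ‖x‖) * A) := by
        gcongr
        exact gauge_nonneg x
    _ = ((finrank ℝ E).factorial : ℝ)⁻¹ * (A * c⁻¹ * (‖x‖ * exp (-(C⁻¹ * ‖x‖)))) := by ring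

variable [MeasurableSpace E] [BorelSpace E]

theorem measurable_surfaceAreaDensity_mul_comp_outerNormal {K : Set E} (hK : IsBodyAroundZero K)
    {φ : E → ℝ} (hφ : ContinuousOn φ (Metric.sphere 0 1)) :
    Measurable fun x => surfaceAreaDensity K x * φ (outerNormal K x) := by
  classical
  have hpiecewise : Measurable ((Metric.sphere 0 1).piecewise φ 0) :=
    hφ.measurable_piecewise continuousOn_const Metric.isClosed_sphere.measurableSet
  convert hK.measurable_surfaceAreaDensity.mul (hpiecewise.comp (measurable_outerNormal K)) using 1
  funext x
  by_cases hx : outerNormal K x ∈ Metric.sphere 0 1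
  · simp [-piecewise_eq_indicator, piecewise_eq_of_mem _ _ _ hx]
  · have hgrad : ∇ (gauge K) x = 0 := by
      contrapose! hx
      simpa [outerNormal] using hx
    simp [surfaceAreaDensity, hgrad]

variable [Nontrivial E]

theorem surfaceAreaDensity_mul_comp_outerNormal_ae_eq {f : E → ℝ}
    (hf : ContinuousOn f (Metric.sphere 0 1)) (hpos : ∀ u ∈ Metric.sphere (0 : E) 1, 0 < f u)
    {u : E → E} (hu : ∀ x, u x ∈ Metric.sphere (0 : E) 1 ∧
      ⟪x, u x⟫ * (f (u x))⁻¹ = gauge (wulffShape f) x) (φ : E → ℝ) :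
    (fun x => surfaceAreaDensity (wulffShape f) x * φ (outerNormal (wulffShape f) x)) =ᵐ[volume]
      fun x => wulffIntegrand f φ x (u x) := by
  filter_upwards [(isBodyAroundZero_wulffShape hf hpos).ae_differentiableAt_gauge] with x hd
  rw [surfaceAreaDensity_wulffShape hf hpos hd (hu x).1 (hu x).2,
    outerNormal_wulffShape hf hpos hd (hu x).1 (hu x).2, wulffIntegrand, (hu x).2]
  ring

theorem continuousOn_integral_surfaceAreaMeasure_wulffShape {Λ : Type*} [TopologicalSpace Λ]
    [FirstCountableTopology Λ] {s : Set Λ} (hs : IsCompact s) {f φ : Λ → E → ℝ}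
    (hf : ContinuousOn (Function.uncurry f) (s ×ˢ Metric.sphere 0 1))
    (hpos : ∀ l ∈ s, ∀ u ∈ Metric.sphere (0 : E) 1, 0 < f l u)
    (hφ : ContinuousOn (Function.uncurry φ) (s ×ˢ Metric.sphere 0 1)) :
    ContinuousOn (fun l => ∫ u, φ l u ∂surfaceAreaMeasure (wulffShape (f l))) s := by
  have hbody (l : Λ) (hl : l ∈ s) : IsBodyAroundZero (wulffShape (f l)) :=
    isBodyAroundZero_wulffShape (hf.uncurry_left l hl) (hpos l hl)
  obtain ⟨u, hu⟩ := exists_argmax_wulffShape hf hpos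
  have hae (l : Λ) (hl : l ∈ s) := surfaceAreaDensity_mul_comp_outerNormal_ae_eq
    (hf.uncurry_left l hl) (hpos l hl) (hu l hl) (φ l)
  suffices hcont : ContinuousOn (fun l => ∫ x, wulffIntegrand (f l) (φ l) x (u l x)) s from
    hcont.congr fun l hl => ((hbody l hl).integral_surfaceAreaMeasure (hφ.uncurry_left l hl)).trans
      (integral_congr_ae (hae l hl))
  have hcompact : IsCompact (s ×ˢ Metric.sphere (0 : E) 1) := hs.prod (isCompact_sphere 0 1)
  obtain ⟨c, hc, C, hC, hcC⟩ := exists_pos_forall_le_and_le_of_isCompact hcompact hf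
    fun z hz => hpos z.1 hz.1 z.2 hz.2
  obtain ⟨A, hA⟩ := hcompact.exists_bound_of_continuousOn
    ((hf.inv₀ fun z hz => (hpos z.1 hz.1 z.2 hz.2).ne').mul hφ)
  intro l₀ hl₀
  refine tendsto_integral_filter_of_dominated_convergence
    (fun x => ((finrank ℝ E).factorial : ℝ)⁻¹ * (A * c⁻¹ * (‖x‖ * exp (-(C⁻¹ * ‖x‖)))))
    (eventually_mem_nhdsWithin.mono fun l hl => ?_)
    (eventually_mem_nhdsWithin.mono fun l hl => Eventually.of_forall fun x => ?_)
    (((integrable_norm_mul_exp_neg_mul_norm volume (inv_pos.2 hC)).const_mul _).const_mul _) ?_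
  · exact (measurable_surfaceAreaDensity_mul_comp_outerNormal
      (hbody l hl) (hφ.uncurry_left l hl)).aestronglyMeasurable.congr (hae l hl)
  · exact abs_wulffIntegrand_le (hf.uncurry_left l hl) hc hC.le (fun v hv => hcC (l, v) ⟨hl, hv⟩)
      (hu l hl x).2 (hA (l, u l x) ⟨hl, (hu l hl x).1⟩)
  · filter_upwards [(hbody l₀ hl₀).ae_differentiableAt_gauge] with x hd
    exact tendsto_apply_apply_of_continuousOn (continuousOn_wulffIntegrand hf hpos hφ x) hl₀
      (hu l₀ hl₀ x).1 tendsto_id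
      (tendsto_argmax_wulffShape hf hpos (fun l hl => hu l hl x) hl₀ hd)

end WeakContinuity

section Alexandrov

theorem abs_exp_neg_sub_exp_neg_le {a b m : ℝ} (ha : m ≤ a) (hb : m ≤ b) :
    |exp (-a) - exp (-b)| ≤ exp (-m) * |a - b| := by
  refine (convex_Ici m).norm_image_sub_le_of_norm_hasDerivWithin_le
    (f := fun t => exp (-t)) (f' := fun t => exp (-t) * -1)
    (fun t _ => (hasDerivAt_neg t).exp.hasDerivWithinAt) (fun t ht => ?_) hb ha
  rw [mul_neg_one, norm_neg, norm_of_nonneg (exp_pos _).le]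
  exact exp_le_exp.2 (neg_le_neg ht)

variable {E : Type*} [NormedAddCommGroup E] [InnerProductSpace ℝ E] [FiniteDimensional ℝ E]
  [Nontrivial E] {s : Set ℝ} {f f' : ℝ → E → ℝ}
  (hsv : Convex ℝ s) (hf : ContinuousOn (Function.uncurry f) (s ×ˢ Metric.sphere 0 1))
  (hpos : ∀ l ∈ s, ∀ u ∈ Metric.sphere (0 : E) 1, 0 < f l u)
  (hf' : ContinuousOn (Function.uncurry f') (s ×ˢ Metric.sphere 0 1))
  (hderiv : ∀ l ∈ s, ∀ u ∈ Metric.sphere (0 : E) 1,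
    HasDerivWithinAt (fun l => f l u) (f' l u) s l)
include hsv hf hpos hf' hderiv

theorem hasDerivWithinAt_gauge_wulffShape {l₀ : ℝ} (hl₀ : l₀ ∈ s) {x : E}
    (hd : DifferentiableAt ℝ (gauge (wulffShape (f l₀))) x) :
    HasDerivWithinAt (fun l => gauge (wulffShape (f l)) x)
      (-(gauge (wulffShape (f l₀)) x * (f l₀ (outerNormal (wulffShape (f l₀)) x))⁻¹ *
        f' l₀ (outerNormal (wulffShape (f l₀)) x))) s l₀ := by
  obtain ⟨u, hu⟩ := exists_argmax_wulffShape hf hpos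
  have hne {l : ℝ} (hl : l ∈ s) {v : E} (hv : v ∈ Metric.sphere (0 : E) 1) : f l v ≠ 0 :=
    (hpos l hl v hv).ne'
  have hlim := tendsto_argmax_wulffShape hf hpos (fun l hl => hu l hl x) hl₀ hd
  have henv : HasDerivWithinAt (fun l => ⟪x, u l x⟫ * (f l (u l x))⁻¹)
      (⟪x, u l₀ x⟫ * (-f' l₀ (u l₀ x) / f l₀ (u l₀ x) ^ 2)) s l₀ := by
    refine hasDerivWithinAt_apply_argmax (ψ := fun l v => ⟪x, v⟫ * (f l v)⁻¹)
      (ψ' := fun l v => ⟪x, v⟫ * (-f' l v / f l v ^ 2)) hsv hl₀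
      (fun l hl v hv => ((hderiv l hl v hv).inv (hne hl hv)).const_mul _) ?_
      (fun l hl => (hu l hl x).1) (fun l hl => isMaxOn_iff.2 fun v hv => ?_) hlim
    · exact (Continuous.continuousOn (by fun_prop)).mul
        (hf'.neg.div (hf.pow 2) fun z hz => pow_ne_zero 2 (hne hz.1 hz.2))
    · rw [(hu l hl x).2]
      exact (isGreatest_gauge_wulffShape (hf.uncurry_left l hl) (hpos l hl) x).2
        (mem_image_of_mem _ hv)
  rw [outerNormal_wulffShape (hf.uncurry_left l₀ hl₀) (hpos l₀ hl₀) hd (hu l₀ hl₀ x).1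
    (hu l₀ hl₀ x).2, ← (hu l₀ hl₀ x).2]
  refine (henv.congr_deriv ?_).congr (fun l hl => (hu l hl x).2.symm) (hu l₀ hl₀ x).2.symm
  have := hne hl₀ (hu l₀ hl₀ x).1
  field_simp

theorem hasDerivWithinAt_exp_neg_gauge_wulffShape {l₀ : ℝ} (hl₀ : l₀ ∈ s) {x : E}
    (hd : DifferentiableAt ℝ (gauge (wulffShape (f l₀))) x) :
    HasDerivWithinAt (fun l => exp (-gauge (wulffShape (f l)) x))
      ((finrank ℝ E).factorial * (surfaceAreaDensity (wulffShape (f l₀)) x *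
        f' l₀ (outerNormal (wulffShape (f l₀)) x))) s l₀ := by
  obtain ⟨u, hu, hmax⟩ :=
    (isGreatest_gauge_wulffShape (hf.uncurry_left l₀ hl₀) (hpos l₀ hl₀) x).1
  have hgauge := hasDerivWithinAt_gauge_wulffShape hsv hf hpos hf' hderiv hl₀ hd
  refine hgauge.fun_neg.exp.congr_deriv ?_
  rw [surfaceAreaDensity_wulffShape (hf.uncurry_left l₀ hl₀) (hpos l₀ hl₀) hd hu hmax,
    outerNormal_wulffShape (hf.uncurry_left l₀ hl₀) (hpos l₀ hl₀) hd hu hmax]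
  have := Nat.factorial_ne_zero (finrank ℝ E)
  field_simp

theorem exists_abs_gauge_wulffShape_sub_le (hs : IsCompact s) : ∃ B : ℝ, ∀ l ∈ s, ∀ m ∈ s, ∀ x : E,
    |gauge (wulffShape (f l)) x - gauge (wulffShape (f m)) x| ≤ ‖x‖ * B * |l - m| := by
  have hne : ∀ z ∈ s ×ˢ Metric.sphere (0 : E) 1, f z.1 z.2 ≠ 0 :=
    fun z hz => (hpos z.1 hz.1 z.2 hz.2).ne'
  obtain ⟨B, hB⟩ := (hs.prod (isCompact_sphere (0 : E) 1)).exists_bound_of_continuousOn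
    (hf'.neg.div (hf.pow 2) fun z hz => pow_ne_zero 2 (hne z hz))
  refine ⟨B, fun l hl m hm x => abs_sub_le_of_isGreatest_image
    (isGreatest_gauge_wulffShape (hf.uncurry_left l hl) (hpos l hl) x)
    (isGreatest_gauge_wulffShape (hf.uncurry_left m hm) (hpos m hm) x) fun u hu => ?_⟩
  have hinner : |⟪x, u⟫| ≤ ‖x‖ := by
    simpa [mem_sphere_zero_iff_norm.1 hu] using abs_real_inner_le_norm x u
  have hinv : |(f l u)⁻¹ - (f m u)⁻¹| ≤ B * |l - m| :=
    hsv.norm_image_sub_le_of_norm_hasDerivWithin_le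
      (fun k hk => (hderiv k hk u hu).inv (hne (k, u) ⟨hk, hu⟩)) (fun k hk => hB (k, u) ⟨hk, hu⟩)
      hm hl
  rw [← mul_sub, abs_mul, mul_assoc]
  gcongr

variable [MeasurableSpace E] [BorelSpace E]

theorem hasDerivWithinAt_volume_wulffShape (hs : IsCompact s) {l₀ : ℝ} (hl₀ : l₀ ∈ s) :
    HasDerivWithinAt (fun l => volume.real (wulffShape (f l)))
      (∫ u, f' l₀ u ∂surfaceAreaMeasure (wulffShape (f l₀))) s l₀ := by
  have hbody (l : ℝ) (hl : l ∈ s) : IsBodyAroundZero (wulffShape (f l)) :=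
    isBodyAroundZero_wulffShape (hf.uncurry_left l hl) (hpos l hl)
  obtain ⟨_, -, C, hC, hcC⟩ := exists_pos_forall_le_and_le_of_isCompact
    (hs.prod (isCompact_sphere (0 : E) 1)) hf fun z hz => hpos z.1 hz.1 z.2 hz.2
  obtain ⟨B, hB⟩ := exists_abs_gauge_wulffShape_sub_le hsv hf hpos hf' hderiv hs
  have hlow (l : ℝ) (hl : l ∈ s) (x : E) : C⁻¹ * ‖x‖ ≤ gauge (wulffShape (f l)) x :=
    inv_mul_norm_le_gauge_wulffShape (hf.uncurry_left l hl) (hpos l hl) hC.le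
      (fun u hu => (hcC (l, u) ⟨hl, hu⟩).2) x
  have hexp : HasDerivWithinAt (fun l => ∫ x, exp (-gauge (wulffShape (f l)) x))
      (∫ x, (finrank ℝ E).factorial * (surfaceAreaDensity (wulffShape (f l₀)) x *
        f' l₀ (outerNormal (wulffShape (f l₀)) x))) s l₀ := by
    refine hasDerivWithinAt_integral_of_norm_sub_le
      (bound := fun x => B * (‖x‖ * exp (-(C⁻¹ * ‖x‖)))) hl₀
      (fun l hl => (hbody l hl).integrable_exp_neg_gauge volume)
      ((integrable_norm_mul_exp_neg_mul_norm volume (inv_pos.2 hC)).const_mul B)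
      (fun l hl => Eventually.of_forall fun x => ?_) ?_
    · calc |exp (-gauge (wulffShape (f l)) x) - exp (-gauge (wulffShape (f l₀)) x)|
          ≤ exp (-(C⁻¹ * ‖x‖)) *
            |gauge (wulffShape (f l)) x - gauge (wulffShape (f l₀)) x| :=
          abs_exp_neg_sub_exp_neg_le (hlow l hl x) (hlow l₀ hl₀ x)
        _ ≤ exp (-(C⁻¹ * ‖x‖)) * (‖x‖ * B * |l - l₀|) := by
          gcongr
          exact hB l hl l₀ hl₀ x
        _ = B * (‖x‖ * exp (-(C⁻¹ * ‖x‖))) * |l - l₀| := by ring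
    · filter_upwards [(hbody l₀ hl₀).ae_differentiableAt_gauge] with x hd
      exact hasDerivWithinAt_exp_neg_gauge_wulffShape hsv hf hpos hf' hderiv hl₀ hd
  have hvol (l : ℝ) (hl : l ∈ s) : volume.real (wulffShape (f l)) =
      ((finrank ℝ E).factorial : ℝ)⁻¹ * ∫ x, exp (-gauge (wulffShape (f l)) x) := by
    rw [(hbody l hl).integral_exp_neg_gauge volume, inv_mul_cancel_left₀ (by positivity)]
  refine ((hexp.const_mul ((finrank ℝ E).factorial : ℝ)⁻¹).congr_deriv ?_).congr hvol
    (hvol l₀ hl₀)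
  rw [integral_const_mul, inv_mul_cancel_left₀ (by positivity),
    (hbody l₀ hl₀).integral_surfaceAreaMeasure (hf'.uncurry_left l₀ hl₀)]

end Alexandrov

section SupportFunction

variable {n : ℕ} {M N : Set (EuclideanSpace ℝ (Fin n))}

theorem suppFn_smul_right (M : Set (EuclideanSpace ℝ (Fin n))) {s : ℝ} (hs : 0 ≤ s)
    (u : EuclideanSpace ℝ (Fin n)) : suppFn M (s • u) = s * suppFn M u := by
  simp only [suppFn, real_inner_smul_right]
  rw [← smul_eq_mul s (sSup _), ← Real.sSup_smul_of_nonneg hs, ← image_smul, image_image]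
  simp only [smul_eq_mul]

theorem suppFn_smul_left (M : Set (EuclideanSpace ℝ (Fin n))) {t : ℝ} (ht : 0 ≤ t)
    (u : EuclideanSpace ℝ (Fin n)) : suppFn (t • M) u = t * suppFn M u := by
  rw [← suppFn_smul_right M ht, suppFn, suppFn, ← image_smul, image_image]
  simp only [real_inner_smul_left, real_inner_smul_right]

theorem suppFn_le (hM : M.Nonempty) {u : EuclideanSpace ℝ (Fin n)} {a : ℝ}
    (h : ∀ x ∈ M, ⟪x, u⟫ ≤ a) : suppFn M u ≤ a :=
  csSup_le (hM.image _) (forall_mem_image.2 h)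

theorem bddAbove_image_inner (hM : IsCompact M) (u : EuclideanSpace ℝ (Fin n)) :
    BddAbove ((fun x => ⟪x, u⟫) '' M) :=
  hM.bddAbove_image (by fun_prop)

theorem inner_le_suppFn (hM : IsCompact M) {x : EuclideanSpace ℝ (Fin n)} (hx : x ∈ M)
    (u : EuclideanSpace ℝ (Fin n)) : ⟪x, u⟫ ≤ suppFn M u :=
  le_csSup (bddAbove_image_inner hM u) (mem_image_of_mem _ hx)

theorem suppFn_add (hMc : IsCompact M) (hM : M.Nonempty) (hNc : IsCompact N) (hN : N.Nonempty)
    (u : EuclideanSpace ℝ (Fin n)) : suppFn (M + N) u = suppFn M u + suppFn N u := by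
  rw [suppFn, ← image2_add, image_image2_distrib fun x y => inner_add_left x y u, image2_add,
    csSup_add (hM.image _) (bddAbove_image_inner hMc u) (hN.image _) (bddAbove_image_inner hNc u),
    suppFn, suppFn]

theorem suppFn_union (hMc : IsCompact M) (hM : M.Nonempty) (hNc : IsCompact N) (hN : N.Nonempty)
    (u : EuclideanSpace ℝ (Fin n)) : suppFn (M ∪ N) u = max (suppFn M u) (suppFn N u) := by
  rw [suppFn, image_union, csSup_union (bddAbove_image_inner hMc u) (hM.image _)
    (bddAbove_image_inner hNc u) (hN.image _), suppFn, suppFn]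

theorem suppFn_closedConvexHull (hMc : IsCompact M) (hM : M.Nonempty)
    (u : EuclideanSpace ℝ (Fin n)) : suppFn (closedConvexHull ℝ M) u = suppFn M u := by
  have hsub : closedConvexHull ℝ M ⊆ {x | ⟪x, u⟫ ≤ suppFn M u} :=
    closedConvexHull_min (fun x hx => inner_le_suppFn hMc hx u)
      (convex_halfSpace_le
        ⟨fun x y => inner_add_left x y u, fun c x => real_inner_smul_left x u c⟩ _)
      (isClosed_le (by fun_prop) continuous_const)
  have hne : (closedConvexHull ℝ M).Nonempty := hM.mono subset_closedConvexHull
  exact (suppFn_le hne hsub).antisymm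
    (csSup_le_csSup ⟨_, forall_mem_image.2 hsub⟩ (hM.image _) (image_mono subset_closedConvexHull))

theorem continuous_suppFn (hM : IsCompact M) : Continuous (suppFn M) :=
  hM.continuous_sSup (f := fun u x => ⟪x, u⟫) (by fun_prop)

theorem suppFn_closedBall (w : EuclideanSpace ℝ (Fin n)) {R : ℝ} (hR : 0 ≤ R)
    (u : EuclideanSpace ℝ (Fin n)) : suppFn (Metric.closedBall w R) u = ⟪w, u⟫ + R * ‖u‖ := by
  refine le_antisymm (suppFn_le ⟨w, Metric.mem_closedBall_self hR⟩ fun x hx => ?_) ?_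
  · rw [← sub_add_cancel x w, inner_add_left, add_comm]
    gcongr
    exact (real_inner_le_norm _ u).trans (by gcongr; exact mem_closedBall_iff_norm.1 hx)
  · have hunit : ‖NormedSpace.normalize u‖ ≤ 1 := by
      rcases eq_or_ne u 0 with rfl | hu
      · simp
      · exact (NormedSpace.norm_normalize hu).le
    have hinner : ⟪NormedSpace.normalize u, u⟫ = ‖u‖ := by
      rcases eq_or_ne u 0 with rfl | hu
      · simp
      · rw [NormedSpace.normalize, real_inner_smul_left, real_inner_self_eq_norm_mul_norm,
          inv_mul_cancel_left₀ (norm_ne_zero_iff.2 hu)]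
    have hmem : w + R • NormedSpace.normalize u ∈ Metric.closedBall w R := by
      simpa [norm_smul, abs_of_nonneg hR] using mul_le_of_le_one_right hR hunit
    calc ⟪w, u⟫ + R * ‖u‖ = ⟪w + R • NormedSpace.normalize u, u⟫ := by
          rw [inner_add_left, real_inner_smul_left, hinner]
      _ ≤ suppFn (Metric.closedBall w R) u := inner_le_suppFn (isCompact_closedBall w R) hmem u

namespace IsBodyAroundZero

theorem nonempty (hM : IsBodyAroundZero M) : M.Nonempty :=
  ⟨0, interior_subset hM.zero_mem_interior⟩

theorem suppFn_pos (hM : IsBodyAroundZero M) {u : EuclideanSpace ℝ (Fin n)} (hu : u ≠ 0) :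
    0 < suppFn M u := by
  obtain ⟨r, hr, hrM⟩ := Metric.nhds_basis_closedBall.mem_iff.1 hM.mem_nhds
  calc 0 < ⟪0, u⟫ + r * ‖u‖ := by
        rw [inner_zero_left, zero_add]
        exact mul_pos hr (norm_pos_iff.2 hu)
    _ = suppFn (Metric.closedBall 0 r) u := (suppFn_closedBall 0 hr.le u).symm
    _ ≤ suppFn M u := suppFn_le (Metric.nonempty_closedBall.2 hr.le) fun x hx =>
      inner_le_suppFn hM.isCompact (hrM hx) u

theorem suppFn_nonneg (hM : IsBodyAroundZero M) (u : EuclideanSpace ℝ (Fin n)) :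
    0 ≤ suppFn M u := by
  simpa using inner_le_suppFn hM.isCompact (interior_subset hM.zero_mem_interior) u

theorem add_smul (hM : IsBodyAroundZero M) (hN : IsBodyAroundZero N) (t : ℝ) :
    IsBodyAroundZero (M + t • N) where
  isCompact := hM.isCompact.add (hN.isCompact.smul t)
  convex := hM.convex.add (hN.convex.smul t)
  zero_mem_interior := subset_interior_add_left <| by
    simpa using add_mem_add hM.zero_mem_interior
      (smul_mem_smul_set (a := t) (interior_subset hN.zero_mem_interior))

theorem add (hM : IsBodyAroundZero M) (hN : IsBodyAroundZero N) : IsBodyAroundZero (M + N) := by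
  simpa using hM.add_smul hN 1

theorem suppFn_add_smul (hM : IsBodyAroundZero M) (hN : IsBodyAroundZero N) {t : ℝ} (ht : 0 ≤ t)
    (u : EuclideanSpace ℝ (Fin n)) : suppFn (M + t • N) u = suppFn M u + t * suppFn N u := by
  rw [suppFn_add hM.isCompact hM.nonempty (hN.isCompact.smul t) (hN.nonempty.smul_set),
    suppFn_smul_left N ht]

theorem closedConvexHull_union (hM : IsBodyAroundZero M) (hN : IsBodyAroundZero N) :
    IsBodyAroundZero (closedConvexHull ℝ (M ∪ N)) where
  isCompact := by
    rw [closedConvexHull_eq_closure_convexHull]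
    exact (isBounded_convexHull.2
      (hM.isCompact.union hN.isCompact).isBounded).isCompact_closure
  convex := convex_closedConvexHull
  zero_mem_interior :=
    interior_mono (subset_union_left.trans subset_closedConvexHull) hM.zero_mem_interior

theorem suppFn_closedConvexHull_union (hM : IsBodyAroundZero M) (hN : IsBodyAroundZero N)
    (u : EuclideanSpace ℝ (Fin n)) :
    suppFn (closedConvexHull ℝ (M ∪ N)) u = max (suppFn M u) (suppFn N u) := by
  rw [suppFn_closedConvexHull (hM.isCompact.union hN.isCompact) hM.nonempty.inl,
    suppFn_union hM.isCompact hM.nonempty hN.isCompact hN.nonempty]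

theorem wulffShape_suppFn (hM : IsBodyAroundZero M) : wulffShape (suppFn M) = M := by
  refine Subset.antisymm (fun x hx => ?_) fun x hx =>
    mem_wulffShape.2 fun u _ => inner_le_suppFn hM.isCompact hx u
  rw [← iInter_halfSpaces_eq hM.convex hM.isCompact.isClosed]
  refine mem_iInter.2 fun l => ?_
  obtain ⟨w, rfl⟩ := (InnerProductSpace.toDual ℝ (EuclideanSpace ℝ (Fin n))).surjective l
  obtain ⟨y, hy, hymax⟩ := hM.isCompact.exists_isMaxOn hM.nonempty
    (f := fun y => ⟪y, w⟫) (by fun_prop)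
  refine ⟨y, hy, ?_⟩
  suffices hle : ⟪x, w⟫ ≤ suppFn M w by
    simpa [real_inner_comm] using hle.trans (suppFn_le hM.nonempty hymax)
  rcases eq_or_ne w 0 with rfl | hw
  · simpa using (suppFn_smul_right M le_rfl 0).ge
  · have hsphere : NormedSpace.normalize w ∈ Metric.sphere (0 : EuclideanSpace ℝ (Fin n)) 1 :=
      mem_sphere_zero_iff_norm.2 (NormedSpace.norm_normalize hw)
    rw [← NormedSpace.norm_smul_normalize w, real_inner_smul_right,
      suppFn_smul_right M (norm_nonneg w)]
    exact mul_le_mul_of_nonneg_left (mem_wulffShape.1 hx _ hsphere) (norm_nonneg w)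

end IsBodyAroundZero

end SupportFunction

section SupportFunctionDifferences

/-- The differences `h_M - h_N` of support functions of convex bodies, as continuous functions on
the unit sphere. They form a vector lattice, which is dense by the Stone–Weierstrass theorem. -/
def suppFnDifferences (n : ℕ) : Set C(Metric.sphere (0 : EuclideanSpace ℝ (Fin n)) 1, ℝ) :=
  {F | ∃ M N : Set (EuclideanSpace ℝ (Fin n)), IsBodyAroundZero M ∧ IsBodyAroundZero N ∧
    ∀ u : Metric.sphere (0 : EuclideanSpace ℝ (Fin n)) 1, F u = suppFn M u - suppFn N u}

variable {n : ℕ}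

theorem neg_mem_suppFnDifferences {F : C(Metric.sphere (0 : EuclideanSpace ℝ (Fin n)) 1, ℝ)}
    (hF : F ∈ suppFnDifferences n) : -F ∈ suppFnDifferences n := by
  obtain ⟨M, N, hM, hN, h⟩ := hF
  exact ⟨N, M, hN, hM, fun u => by simp [h]⟩

theorem sup_mem_suppFnDifferences {F G : C(Metric.sphere (0 : EuclideanSpace ℝ (Fin n)) 1, ℝ)}
    (hF : F ∈ suppFnDifferences n) (hG : G ∈ suppFnDifferences n) :
    F ⊔ G ∈ suppFnDifferences n := by
  obtain ⟨M, N, hM, hN, hF⟩ := hF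
  obtain ⟨P, Q, hP, hQ, hG⟩ := hG
  refine ⟨closedConvexHull ℝ ((M + Q) ∪ (P + N)), N + Q,
    (hM.add hQ).closedConvexHull_union (hP.add hN), hN.add hQ, fun u => ?_⟩
  rw [(hM.add hQ).suppFn_closedConvexHull_union (hP.add hN),
    suppFn_add hM.isCompact hM.nonempty hQ.isCompact hQ.nonempty,
    suppFn_add hP.isCompact hP.nonempty hN.isCompact hN.nonempty,
    suppFn_add hN.isCompact hN.nonempty hQ.isCompact hQ.nonempty, ContinuousMap.sup_apply, hF, hG,
    ← max_sub_sub_right]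
  congr 1 <;> ring

theorem inf_mem_suppFnDifferences {F G : C(Metric.sphere (0 : EuclideanSpace ℝ (Fin n)) 1, ℝ)}
    (hF : F ∈ suppFnDifferences n) (hG : G ∈ suppFnDifferences n) :
    F ⊓ G ∈ suppFnDifferences n := by
  rw [← neg_neg (F ⊓ G), neg_inf]
  exact neg_mem_suppFnDifferences
    (sup_mem_suppFnDifferences (neg_mem_suppFnDifferences hF) (neg_mem_suppFnDifferences hG))

theorem inner_add_const_mem_suppFnDifferences (w : EuclideanSpace ℝ (Fin n)) (a : ℝ) :
    (⟨fun u => ⟪w, (u : EuclideanSpace ℝ (Fin n))⟫ + a, by fun_prop⟩ :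
      C(Metric.sphere (0 : EuclideanSpace ℝ (Fin n)) 1, ℝ)) ∈ suppFnDifferences n := by
  have hw : ‖w‖ < ‖w‖ + |a| + 1 := by linarith [abs_nonneg a]
  have h0 : ‖(0 : EuclideanSpace ℝ (Fin n))‖ < ‖w‖ + |a| + 1 - a := by
    rw [norm_zero]
    linarith [le_abs_self a, norm_nonneg w]
  refine ⟨_, _, isBodyAroundZero_closedBall hw, isBodyAroundZero_closedBall h0, fun u => ?_⟩
  rw [suppFn_closedBall w ((norm_nonneg w).trans hw.le),
    suppFn_closedBall 0 ((norm_nonneg _).trans h0.le), mem_sphere_zero_iff_norm.1 u.2]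
  simp only [ContinuousMap.coe_mk, inner_zero_left]
  ring

theorem separatesPointsStrongly_suppFnDifferences :
    (suppFnDifferences n).SeparatesPointsStrongly := by
  intro v x y
  set w : EuclideanSpace ℝ (Fin n) :=
    ((v x - v y) / ‖(x : EuclideanSpace ℝ (Fin n)) - y‖ ^ 2) • ((x : EuclideanSpace ℝ (Fin n)) - y)
  refine ⟨_, inner_add_const_mem_suppFnDifferences w (v x - ⟪w, (x : EuclideanSpace ℝ (Fin n))⟫),
    by simp, ?_⟩
  have hw : ⟪w, (x : EuclideanSpace ℝ (Fin n)) - y⟫ = v x - v y := by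
    rcases eq_or_ne x y with rfl | hxy
    · simp
    · have : ‖(x : EuclideanSpace ℝ (Fin n)) - y‖ ≠ 0 :=
        norm_ne_zero_iff.2 (sub_ne_zero.2 (Subtype.coe_injective.ne hxy))
      rw [real_inner_smul_left, real_inner_self_eq_norm_sq, div_mul_cancel₀ _ (pow_ne_zero 2 this)]
  rw [inner_sub_right] at hw
  simp only [ContinuousMap.coe_mk]
  linarith

theorem exists_abs_sub_suppFn_sub_suppFn_le {φ : EuclideanSpace ℝ (Fin n) → ℝ}
    (hφ : ContinuousOn φ (Metric.sphere 0 1)) {ε : ℝ} (hε : 0 < ε) :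
    ∃ M N : Set (EuclideanSpace ℝ (Fin n)), IsBodyAroundZero M ∧ IsBodyAroundZero N ∧
      ∀ u ∈ Metric.sphere 0 1, |φ u - (suppFn M u - suppFn N u)| ≤ ε := by
  have hdense : closure (suppFnDifferences n) = univ := ContinuousMap.sublattice_closure_eq_top _
    ⟨_, inner_add_const_mem_suppFnDifferences 0 0⟩
    (fun _ hF _ hG => inf_mem_suppFnDifferences hF hG)
    (fun _ hF _ hG => sup_mem_suppFnDifferences hF hG) separatesPointsStrongly_suppFnDifferences
  obtain ⟨F, ⟨M, N, hM, hN, hF⟩, hdist⟩ := Metric.mem_closure_iff.1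
    (hdense ▸ mem_univ (⟨_, continuousOn_iff_continuous_domRestrict.1 hφ⟩ : C(_, ℝ))) ε hε
  refine ⟨M, N, hM, hN, fun u hu => ?_⟩
  rw [← hF ⟨u, hu⟩]
  exact (ContinuousMap.dist_apply_le_dist ⟨u, hu⟩).trans hdist.le

end SupportFunctionDifferences

section Homogeneous

variable {E : Type*} [NormedAddCommGroup E] [NormedSpace ℝ E] {φ : E → ℝ}
  (hhom : ∀ s, 0 ≤ s → ∀ x, φ (s • x) = s * φ x)
include hhom

theorem abs_le_mul_norm_of_homogeneous {a : ℝ} (ha : ∀ u ∈ Metric.sphere (0 : E) 1, |φ u| ≤ a)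
    (x : E) : |φ x| ≤ a * ‖x‖ := by
  rw [← NormedSpace.norm_smul_normalize x, hhom _ (norm_nonneg x), abs_mul, abs_norm,
    NormedSpace.norm_smul_normalize, mul_comm]
  rcases eq_or_ne x 0 with rfl | hx
  · simp
  · gcongr
    exact ha _ (mem_sphere_zero_iff_norm.2 (NormedSpace.norm_normalize hx))

variable [MeasurableSpace E] {μ : Measure E} (hnorm : Integrable (fun x => ‖x‖) μ)
include hnorm

theorem abs_integral_le_of_homogeneous {a : ℝ}
    (ha : ∀ u ∈ Metric.sphere (0 : E) 1, |φ u| ≤ a) : |∫ x, φ x ∂μ| ≤ a * ∫ x, ‖x‖ ∂μ := by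
  rw [← integral_const_mul, ← norm_eq_abs]
  exact norm_integral_le_of_norm_le (hnorm.const_mul a)
    (Eventually.of_forall (abs_le_mul_norm_of_homogeneous hhom ha))

theorem integrable_of_homogeneous [BorelSpace E] [ProperSpace E] (hφ : ContinuousOn φ {0}ᶜ) :
    Integrable φ μ := by
  obtain ⟨a, ha⟩ := (isCompact_sphere (0 : E) 1).exists_bound_of_continuousOn
    (hφ.mono fun u hu => ne_zero_of_mem_unit_sphere ⟨u, hu⟩)
  exact (hnorm.const_mul a).mono'
    (measurable_of_continuousOn_compl_singleton 0 hφ).aestronglyMeasurable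
    (Eventually.of_forall (abs_le_mul_norm_of_homogeneous hhom ha))

end Homogeneous

section MinkowskiFirstVariation

variable {n : ℕ} {μ ν : Measure (EuclideanSpace ℝ (Fin n))} {φ : EuclideanSpace ℝ (Fin n) → ℝ}

theorem integrable_suppFn (hμ : Integrable (fun x => ‖x‖) μ)
    {M : Set (EuclideanSpace ℝ (Fin n))} (hM : IsBodyAroundZero M) : Integrable (suppFn M) μ :=
  integrable_of_homogeneous (fun _ hs u => suppFn_smul_right M hs u) hμ
    (continuous_suppFn hM.isCompact).continuousOn

theorem abs_integral_sub_integral_suppFn_sub_le (hμ : Integrable (fun x => ‖x‖) μ)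
    (hφ : ContinuousOn φ {0}ᶜ) (hhom : ∀ s, 0 ≤ s → ∀ x, φ (s • x) = s * φ x)
    {M N : Set (EuclideanSpace ℝ (Fin n))} (hM : IsBodyAroundZero M) (hN : IsBodyAroundZero N)
    {ε : ℝ} (hε : ∀ u ∈ Metric.sphere 0 1, |φ u - (suppFn M u - suppFn N u)| ≤ ε) :
    |∫ x, φ x ∂μ - (∫ x, suppFn M x ∂μ - ∫ x, suppFn N x ∂μ)| ≤ ε * ∫ x, ‖x‖ ∂μ := by
  have hMi := integrable_suppFn hμ hM
  have hNi := integrable_suppFn hμ hN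
  rw [← integral_sub hMi hNi,
    ← integral_sub (g := fun x => suppFn M x - suppFn N x)
      (integrable_of_homogeneous hhom hμ hφ) (hMi.sub hNi)]
  refine abs_integral_le_of_homogeneous (fun s hs x => ?_) hμ hε
  rw [hhom s hs, suppFn_smul_right M hs, suppFn_smul_right N hs]
  ring

theorem suppFn_unit_closedBall :
    suppFn (Metric.closedBall (0 : EuclideanSpace ℝ (Fin n)) 1) = fun u => ‖u‖ := by
  ext u
  simp [suppFn_closedBall]

theorem integral_eq_of_integral_suppFn_eq (hμ : Integrable (fun x => ‖x‖) μ)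
    (hν : Integrable (fun x => ‖x‖) ν)
    (heq : ∀ M, IsBodyAroundZero M → ∫ x, suppFn M x ∂μ = ∫ x, suppFn M x ∂ν)
    (hφ : ContinuousOn φ {0}ᶜ) (hhom : ∀ s, 0 ≤ s → ∀ x, φ (s • x) = s * φ x) :
    ∫ x, φ x ∂μ = ∫ x, φ x ∂ν := by
  set A := ∫ x, ‖x‖ ∂μ + ∫ x, ‖x‖ ∂ν with hA
  have hA0 : 0 < A + 1 := by positivity
  refine eq_of_forall_dist_le fun ε hε => ?_
  obtain ⟨M, N, hM, hN, hMN⟩ := exists_abs_sub_suppFn_sub_suppFn_le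
    (hφ.mono fun u hu => ne_zero_of_mem_unit_sphere ⟨u, hu⟩) (div_pos hε hA0)
  have hμφ := abs_integral_sub_integral_suppFn_sub_le hμ hφ hhom hM hN hMN
  have hνφ := abs_integral_sub_integral_suppFn_sub_le hν hφ hhom hM hN hMN
  rw [← heq M hM, ← heq N hN, abs_sub_comm] at hνφ
  calc |∫ x, φ x ∂μ - ∫ x, φ x ∂ν|
      ≤ ε / (A + 1) * ∫ x, ‖x‖ ∂μ + ε / (A + 1) * ∫ x, ‖x‖ ∂ν :=
        (abs_sub_le _ _ _).trans (add_le_add hμφ hνφ)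
    _ = A / (A + 1) * ε := by rw [hA]; ring
    _ ≤ ε := mul_le_of_le_one_left hε.le (div_le_one_of_le₀ (by linarith) hA0.le)

/-- `μ` represents the first variation of the volume of `K` under Minkowski addition,
`d/dt vol(K + t M) = ∫ h_M dμ` at `t = 0⁺`, the property by which the surface area measure of `K`
is characterised. Nothing is assumed about the support of `μ`, so `μ` is determined only on
positively homogeneous functions. -/
def HasMinkowskiFirstVariation (K : Set (EuclideanSpace ℝ (Fin n)))
    (μ : Measure (EuclideanSpace ℝ (Fin n))) : Prop :=
  ∀ M, IsBodyAroundZero M →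
    HasDerivWithinAt (fun t => volume.real (K + t • M)) (∫ x, suppFn M x ∂μ) (Ici (0 : ℝ)) 0

variable [NeZero n] {K : Set (EuclideanSpace ℝ (Fin n))}

theorem IsBodyAroundZero.hasMinkowskiFirstVariation_surfaceAreaMeasure (hK : IsBodyAroundZero K) :
    HasMinkowskiFirstVariation K (surfaceAreaMeasure K) := by
  intro M hM
  have hne {u : EuclideanSpace ℝ (Fin n)} (hu : u ∈ Metric.sphere 0 1) : u ≠ 0 :=
    ne_zero_of_mem_unit_sphere ⟨u, hu⟩
  have hwulff {t : ℝ} (ht : 0 ≤ t) :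
      wulffShape (fun u => suppFn K u + t * suppFn M u) = K + t • M := by
    simpa only [← hK.suppFn_add_smul hM ht] using (hK.add_smul hM t).wulffShape_suppFn
  have hKcont := continuous_suppFn hK.isCompact
  have hMcont := continuous_suppFn hM.isCompact
  have hderiv (t : ℝ) (u : EuclideanSpace ℝ (Fin n)) :
      HasDerivAt (fun t => suppFn K u + t * suppFn M u) (suppFn M u) t := by
    simpa using ((hasDerivAt_id t).mul_const (suppFn M u)).const_add (suppFn K u)
  have h := hasDerivWithinAt_volume_wulffShape (s := Icc 0 1)
    (f := fun t u => suppFn K u + t * suppFn M u) (f' := fun _ => suppFn M) (l₀ := 0)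
    (convex_Icc 0 1) (Continuous.continuousOn (by fun_prop))
    (fun t ht u hu => add_pos_of_pos_of_nonneg (hK.suppFn_pos (hne hu))
      (mul_nonneg ht.1 (hM.suppFn_pos (hne hu)).le))
    (Continuous.continuousOn (by fun_prop))
    (fun t _ u _ => (hderiv t u).hasDerivWithinAt) isCompact_Icc (left_mem_Icc.2 zero_le_one)
  have hK' : wulffShape (fun u => suppFn K u + 0 * suppFn M u) = K := by
    simpa only [zero_mul, add_zero] using hK.wulffShape_suppFn
  rw [hK'] at h
  refine (h.mono_of_mem_nhdsWithin (Icc_mem_nhdsGE zero_lt_one)).congr (fun t ht => ?_) ?_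
  · rw [hwulff ht]
  · rw [hwulff le_rfl]

theorem HasMinkowskiFirstVariation.integral_eq (hK : IsBodyAroundZero K)
    (hμ : HasMinkowskiFirstVariation K μ)
    (hφ : ContinuousOn φ {0}ᶜ) (hhom : ∀ s, 0 ≤ s → ∀ x, φ (s • x) = s * φ x) :
    ∫ x, φ x ∂μ = ∫ x, φ x ∂surfaceAreaMeasure K := by
  have heq (M : Set (EuclideanSpace ℝ (Fin n))) (hM : IsBodyAroundZero M) :
      ∫ x, suppFn M x ∂μ = ∫ x, suppFn M x ∂surfaceAreaMeasure K :=
    ((uniqueDiffOn_Ici 0) 0 self_mem_Ici).eq_deriv _ (hμ M hM)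
      (hK.hasMinkowskiFirstVariation_surfaceAreaMeasure M hM)
  have hσ : Integrable (fun x => ‖x‖) (surfaceAreaMeasure K) :=
    hK.integrable_surfaceAreaMeasure continuous_norm.continuousOn
  have hσpos : ∫ x, ‖x‖ ∂surfaceAreaMeasure K ≠ 0 := by
    have := hK.isFiniteMeasure_surfaceAreaMeasure
    rw [integral_congr_ae (hK.ae_mem_sphere_surfaceAreaMeasure.mono
      fun u hu => mem_sphere_zero_iff_norm.1 hu)]
    simpa [measureReal_eq_zero_iff] using hK.surfaceAreaMeasure_ne_zero
  refine integral_eq_of_integral_suppFn_eq (.of_integral_ne_zero ?_) hσ heq hφ hhom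
  rwa [← suppFn_unit_closedBall, heq _ (isBodyAroundZero_closedBall (by simp)),
    suppFn_unit_closedBall]

end MinkowskiFirstVariation

section PowerMean

open Classical in
/-- The `p`-mean of `a` and `b` with weights `1 - t` and `t`, the geometric mean for `p = 0`. -/
noncomputable def powerMean (p t a b : ℝ) : ℝ :=
  if p = 0 then a ^ (1 - t) * b ^ t else ((1 - t) * a ^ p + t * b ^ p) ^ (1 / p)

open Classical in
/-- The derivative of `powerMean p t a b` with respect to the weight `t`. -/
noncomputable def powerMeanDeriv (p t a b : ℝ) : ℝ :=
  if p = 0 then a ^ (1 - t) * b ^ t * log (b / a)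
  else (b ^ p - a ^ p) / p * ((1 - t) * a ^ p + t * b ^ p) ^ ((1 - p) / p)

variable {p t a b : ℝ}

theorem weighted_rpow_add_rpow_pos (p : ℝ) (ht : t ∈ Icc 0 1) (ha : 0 < a) (hb : 0 < b) :
    0 < (1 - t) * a ^ p + t * b ^ p :=
  convex_Ioi (0 : ℝ) (rpow_pos_of_pos ha p) (rpow_pos_of_pos hb p) (sub_nonneg.2 ht.2) ht.1
    (sub_add_cancel 1 t)

theorem powerMean_pos (p : ℝ) (ht : t ∈ Icc 0 1) (ha : 0 < a) (hb : 0 < b) :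
    0 < powerMean p t a b := by
  unfold powerMean
  split_ifs
  · positivity
  · exact rpow_pos_of_pos (weighted_rpow_add_rpow_pos p ht ha hb) _

theorem hasDerivAt_powerMean (p : ℝ) (ht : t ∈ Icc 0 1) (ha : 0 < a) (hb : 0 < b) :
    HasDerivAt (fun t => powerMean p t a b) (powerMeanDeriv p t a b) t := by
  have hsub : HasDerivAt (fun t : ℝ => 1 - t) (-1) t := (hasDerivAt_id t).const_sub 1
  unfold powerMean powerMeanDeriv
  split_ifs with hp
  · refine ((hsub.const_rpow ha).mul ((hasDerivAt_id t).const_rpow hb)).congr_deriv ?_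
    rw [log_div hb.ne' ha.ne', id]
    ring
  · refine (((hsub.mul_const (a ^ p)).add ((hasDerivAt_id t).mul_const (b ^ p))).rpow_const
      (p := 1 / p) (.inl (weighted_rpow_add_rpow_pos p ht ha hb).ne')).congr_deriv ?_
    rw [sub_div 1 p p, div_self hp]
    simp only [Pi.add_apply, id]
    ring

theorem continuousOn_rpow_mul_rpow :
    ContinuousOn (fun z : ℝ × ℝ × ℝ => z.2.1 ^ (1 - z.1) * z.2.2 ^ z.1)
      (Icc 0 1 ×ˢ Ioi 0 ×ˢ Ioi 0) :=
  .mul (.rpow (by fun_prop) (by fun_prop) fun z hz => .inl (ne_of_gt hz.2.1))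
    (.rpow (by fun_prop) (by fun_prop) fun z hz => .inl (ne_of_gt hz.2.2))

theorem continuousOn_weighted_rpow_add_rpow_rpow (p q : ℝ) :
    ContinuousOn (fun z : ℝ × ℝ × ℝ => ((1 - z.1) * z.2.1 ^ p + z.1 * z.2.2 ^ p) ^ q)
      (Icc 0 1 ×ˢ Ioi 0 ×ˢ Ioi 0) := by
  refine .rpow_const (.add (.mul (by fun_prop) ?_) (.mul (by fun_prop) ?_)) fun z hz =>
    .inl (weighted_rpow_add_rpow_pos p hz.1 hz.2.1 hz.2.2).ne'
  · exact .rpow_const (by fun_prop) fun z hz => .inl (ne_of_gt hz.2.1)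
  · exact .rpow_const (by fun_prop) fun z hz => .inl (ne_of_gt hz.2.2)

theorem continuousOn_powerMean (p : ℝ) :
    ContinuousOn (fun z : ℝ × ℝ × ℝ => powerMean p z.1 z.2.1 z.2.2)
      (Icc 0 1 ×ˢ Ioi 0 ×ˢ Ioi 0) := by
  unfold powerMean
  split_ifs
  · exact continuousOn_rpow_mul_rpow
  · exact continuousOn_weighted_rpow_add_rpow_rpow p (1 / p)

theorem continuousOn_powerMeanDeriv (p : ℝ) :
    ContinuousOn (fun z : ℝ × ℝ × ℝ => powerMeanDeriv p z.1 z.2.1 z.2.2)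
      (Icc 0 1 ×ˢ Ioi 0 ×ˢ Ioi 0) := by
  unfold powerMeanDeriv
  split_ifs
  · refine continuousOn_rpow_mul_rpow.mul (.log (.div (by fun_prop) (by fun_prop) ?_) ?_)
    · exact fun z hz => ne_of_gt hz.2.1
    · exact fun z hz => ne_of_gt (div_pos hz.2.2 hz.2.1)
  · refine .mul (.div_const (.sub ?_ ?_) p) (continuousOn_weighted_rpow_add_rpow_rpow p _)
    · exact .rpow_const (by fun_prop) fun z hz => .inl (ne_of_gt hz.2.2)
    · exact .rpow_const (by fun_prop) fun z hz => .inl (ne_of_gt hz.2.1)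

theorem powerMeanDeriv_mul_mul (p : ℝ) (ht : t ∈ Icc 0 1) {s : ℝ} (hs : 0 ≤ s) (ha : 0 ≤ a)
    (hb : 0 ≤ b) : powerMeanDeriv p t (s * a) (s * b) = s * powerMeanDeriv p t a b := by
  rcases hs.eq_or_lt with rfl | hs
  · simp [powerMeanDeriv]
  unfold powerMeanDeriv
  split_ifs with hp
  · have hst : s ^ (1 - t) * s ^ t = s := by rw [← rpow_add hs, sub_add_cancel, rpow_one]
    rw [mul_rpow hs.le ha, mul_rpow hs.le hb, mul_div_mul_left _ _ hs.ne', mul_mul_mul_comm, hst,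
      mul_assoc]
  · have hsp : s ^ p * (s ^ p) ^ ((1 - p) / p) = s := by
      rw [← rpow_mul hs.le, mul_div_cancel₀ _ hp, ← rpow_add hs, add_sub_cancel, rpow_one]
    have hnonneg : 0 ≤ (1 - t) * a ^ p + t * b ^ p :=
      add_nonneg (mul_nonneg (sub_nonneg.2 ht.2) (rpow_nonneg ha p))
        (mul_nonneg ht.1 (rpow_nonneg hb p))
    calc ((s * b) ^ p - (s * a) ^ p) / p *
          ((1 - t) * (s * a) ^ p + t * (s * b) ^ p) ^ ((1 - p) / p)
        = s ^ p * ((b ^ p - a ^ p) / p) *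
          (s ^ p * ((1 - t) * a ^ p + t * b ^ p)) ^ ((1 - p) / p) := by
          rw [mul_rpow hs.le ha, mul_rpow hs.le hb]
          ring_nf
      _ = s ^ p * (s ^ p) ^ ((1 - p) / p) *
          ((b ^ p - a ^ p) / p * ((1 - t) * a ^ p + t * b ^ p) ^ ((1 - p) / p)) := by
          rw [mul_rpow (rpow_nonneg hs.le p) hnonneg]
          ring
      _ = s * ((b ^ p - a ^ p) / p * ((1 - t) * a ^ p + t * b ^ p) ^ ((1 - p) / p)) := by
          rw [hsp]

end PowerMean

section PComb

variable {n : ℕ} {K L : Set (EuclideanSpace ℝ (Fin n))} (hK : IsBodyAroundZero K)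
  (hL : IsBodyAroundZero L)
include hK hL

theorem powerMeanDeriv_suppFn_smul (p : ℝ) {lam : ℝ} (hlam : lam ∈ Icc 0 1) {s : ℝ}
    (hs : 0 ≤ s) (u : EuclideanSpace ℝ (Fin n)) :
    powerMeanDeriv p lam (suppFn K (s • u)) (suppFn L (s • u)) =
      s * powerMeanDeriv p lam (suppFn K u) (suppFn L u) := by
  rw [suppFn_smul_right K hs, suppFn_smul_right L hs,
    powerMeanDeriv_mul_mul p hlam hs (hK.suppFn_nonneg u) (hL.suppFn_nonneg u)]

theorem continuousOn_comp_suppFn {g : ℝ × ℝ × ℝ → ℝ} {s : Set ℝ}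
    (hg : ContinuousOn g (s ×ˢ Ioi 0 ×ˢ Ioi 0)) :
    ContinuousOn (Function.uncurry fun l u => g (l, suppFn K u, suppFn L u)) (s ×ˢ {0}ᶜ) := by
  have hKcont := continuous_suppFn hK.isCompact
  have hLcont := continuous_suppFn hL.isCompact
  exact hg.comp (Continuous.continuousOn (by fun_prop))
    fun z hz => ⟨hz.1, hK.suppFn_pos hz.2, hL.suppFn_pos hz.2⟩

theorem continuousOn_pMean (p : ℝ) :
    ContinuousOn (Function.uncurry (pMean p K L)) (Icc 0 1 ×ˢ Metric.sphere 0 1) :=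
  (continuousOn_comp_suppFn hK hL (continuousOn_powerMean p)).mono
    (prod_mono_right fun u hu => ne_zero_of_mem_unit_sphere ⟨u, hu⟩)

theorem continuousOn_powerMeanDeriv_suppFn (p : ℝ) :
    ContinuousOn (Function.uncurry fun l u => powerMeanDeriv p l (suppFn K u) (suppFn L u))
      (Icc 0 1 ×ˢ {0}ᶜ) :=
  continuousOn_comp_suppFn hK hL (continuousOn_powerMeanDeriv p)

theorem pMean_pos (p : ℝ) {lam : ℝ} (hlam : lam ∈ Icc 0 1) {u : EuclideanSpace ℝ (Fin n)}
    (hu : u ∈ Metric.sphere 0 1) : 0 < pMean p K L lam u :=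
  have hne : u ≠ 0 := ne_zero_of_mem_unit_sphere ⟨u, hu⟩
  powerMean_pos p hlam (hK.suppFn_pos hne) (hL.suppFn_pos hne)

theorem isBodyAroundZero_pComb (p : ℝ) {lam : ℝ} (hlam : lam ∈ Icc 0 1) :
    IsBodyAroundZero (pComb p K L lam) :=
  isBodyAroundZero_wulffShape ((continuousOn_pMean hK hL p).uncurry_left lam hlam)
    fun _ => pMean_pos hK hL p hlam

variable [NeZero n]

theorem hasDerivWithinAt_volume_pComb (p : ℝ) {lam : ℝ} (hlam : lam ∈ Icc 0 1) :
    HasDerivWithinAt (fun l => volume.real (pComb p K L l))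
      (∫ u, powerMeanDeriv p lam (suppFn K u) (suppFn L u) ∂surfaceAreaMeasure (pComb p K L lam))
      (Icc 0 1) lam := by
  have hne {u : EuclideanSpace ℝ (Fin n)} (hu : u ∈ Metric.sphere 0 1) : u ≠ 0 :=
    ne_zero_of_mem_unit_sphere ⟨u, hu⟩
  exact hasDerivWithinAt_volume_wulffShape (f := pMean p K L)
    (f' := fun l u => powerMeanDeriv p l (suppFn K u) (suppFn L u)) (convex_Icc 0 1)
    (continuousOn_pMean hK hL p) (fun l hl u => pMean_pos hK hL p hl)
    ((continuousOn_powerMeanDeriv_suppFn hK hL p).mono (prod_mono_right fun u => hne))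
    (fun l hl u hu => (hasDerivAt_powerMean p hl (hK.suppFn_pos (hne hu))
      (hL.suppFn_pos (hne hu))).hasDerivWithinAt) isCompact_Icc hlam

theorem continuousOn_derivWithin_volume_pComb (p : ℝ) :
    ContinuousOn (derivWithin (fun l => volume.real (pComb p K L l)) (Icc 0 1)) (Icc 0 1) := by
  have hint : ContinuousOn (fun l => ∫ u, powerMeanDeriv p l (suppFn K u) (suppFn L u)
      ∂surfaceAreaMeasure (pComb p K L l)) (Icc 0 1) :=
    continuousOn_integral_surfaceAreaMeasure_wulffShape isCompact_Icc (continuousOn_pMean hK hL p)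
      (fun l hl u => pMean_pos hK hL p hl)
      ((continuousOn_powerMeanDeriv_suppFn hK hL p).mono
        (prod_mono_right fun u hu => ne_zero_of_mem_unit_sphere ⟨u, hu⟩))
  exact hint.congr fun lam hlam => (hasDerivWithinAt_volume_pComb hK hL p hlam).derivWithin
    (uniqueDiffOn_Icc zero_lt_one lam hlam)

theorem vol_pComb_contDiff_general (p : ℝ) {SS : ℝ → Measure (EuclideanSpace ℝ (Fin n))}
    (hSS : ∀ lam ∈ Icc 0 1, HasMinkowskiFirstVariation (pComb p K L lam) (SS lam)) :
    (∀ lam ∈ Icc 0 1, HasDerivWithinAt (fun l => volume.real (pComb p K L l))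
      (∫ x, powerMeanDeriv p lam (suppFn K x) (suppFn L x) ∂SS lam) (Icc 0 1) lam) ∧
    ContinuousOn (derivWithin (fun l => volume.real (pComb p K L l)) (Icc 0 1)) (Icc 0 1) := by
  refine ⟨fun lam hlam => ?_, continuousOn_derivWithin_volume_pComb hK hL p⟩
  rw [(hSS lam hlam).integral_eq (isBodyAroundZero_pComb hK hL p hlam)
    ((continuousOn_powerMeanDeriv_suppFn hK hL p).uncurry_left lam hlam)
    fun s hs => powerMeanDeriv_suppFn_smul hK hL p hlam hs]
  exact hasDerivWithinAt_volume_pComb hK hL p hlam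

end PComb

end

/-- `λ ↦ vol((1-λ)K +ₚ λL)` is continuously differentiable on `[0,1]`,
with the stated integral formula for the derivative against the surface area measure
`S_{K_λ}` (characterized here by `(d/dt)|₀⁺ vol(K_λ + tM) = ∫ h_M dS_{K_λ}`). -/
theorem vol_pComb_contDiff (n : ℕ) (hn : 0 < n) (p : ℝ) (hp0 : 0 ≤ p) (hp1 : p < 1)
    (K L : Set (EuclideanSpace ℝ (Fin n)))
    (hKc : IsCompact K) (hKv : Convex ℝ K)
    (hK0 : (0 : EuclideanSpace ℝ (Fin n)) ∈ interior K)
    (hLc : IsCompact L) (hLv : Convex ℝ L)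
    (hL0 : (0 : EuclideanSpace ℝ (Fin n)) ∈ interior L)
    (SS : ℝ → Measure (EuclideanSpace ℝ (Fin n)))
    (hSS : ∀ lam ∈ Icc (0 : ℝ) 1, ∀ M : Set (EuclideanSpace ℝ (Fin n)),
      IsCompact M → Convex ℝ M → (0 : EuclideanSpace ℝ (Fin n)) ∈ interior M →
      HasDerivWithinAt (fun t => (volume (pComb p K L lam + t • M)).toReal)
        (∫ x, suppFn M x ∂(SS lam)) (Ici (0 : ℝ)) 0) :
    (0 < p → ∀ lam ∈ Icc (0 : ℝ) 1,
      HasDerivWithinAt (fun l => (volume (pComb p K L l)).toReal)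
        (∫ x, ((suppFn L x ^ p - suppFn K x ^ p) / p)
          * ((1 - lam) * suppFn K x ^ p + lam * suppFn L x ^ p) ^ ((1 - p) / p)
          ∂(SS lam)) (Icc (0 : ℝ) 1) lam) ∧
    (p = 0 → ∀ lam ∈ Icc (0 : ℝ) 1,
      HasDerivWithinAt (fun l => (volume (pComb p K L l)).toReal)
        (∫ x, suppFn K x ^ (1 - lam) * suppFn L x ^ lam
          * Real.log (suppFn L x / suppFn K x) ∂(SS lam)) (Icc (0 : ℝ) 1) lam) ∧
    ContinuousOn
      (fun lam => derivWithin (fun l => (volume (pComb p K L l)).toReal)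
        (Icc (0 : ℝ) 1) lam) (Icc (0 : ℝ) 1) := by
  have : NeZero n := .of_pos hn
  obtain ⟨hderiv, hcont⟩ := vol_pComb_contDiff_general ⟨hKc, hKv, hK0⟩ ⟨hLc, hLv, hL0⟩ p
    fun lam hlam M hM => hSS lam hlam M hM.isCompact hM.convex hM.zero_mem_interior
  exact ⟨fun hp => by simpa only [powerMeanDeriv, Measure.real, if_neg hp.ne'] using hderiv,
    fun hp => by simpa only [powerMeanDeriv, Measure.real, if_pos hp] using hderiv, hcont⟩
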